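/- arXiv:2206.04842 — 4 statements merged into one kernel-verified Lean document; each statement's English description precedes it below -/
import Mathlib

section
/- Let a ≥ 1 and let d be a positive integer with ⌈d/a⌉ ≥ 12, and let n be a positive integer with 1 ≤ ⌈n/a⌉ ≤ 5⌈d/a⌉. If d ≢ −3 (mod a), then q_d^{(a)}(n) ≥ Q_d^{(a,-)}(n). If d ≡ −3 (mod a), then q_d^{(a)}(n) ≥ Q_d^{(a,-)}(n) provided n ≠ d + 3 + a. -/
/-- `q_d^{(a)}(n)`: the number of partitions of `n` into parts of size at least `a`
such that successive parts differ by at least `d`. -/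
noncomputable def gapCount (d a n : ℕ) : ℕ :=
  Nat.card {p : n.Partition //
    (∀ x ∈ p.parts, a ≤ x) ∧
    List.Chain' (fun x y => x + d ≤ y) (p.parts.sort (· ≤ ·))}

/-- `Q_d^{(a)}(n)`: the number of partitions of `n` into parts congruent to `a` or `-a`
modulo `d + 3`. -/
noncomputable def congCount (d a n : ℕ) : ℕ :=
  Nat.card {p : n.Partition //
    ∀ x ∈ p.parts, x ≡ a [MOD d + 3] ∨ x + a ≡ 0 [MOD d + 3]}

/-- `Q_d^{(a,-)}(n)`: as `congCount`, but no part equals `d + 3 - a`. -/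
noncomputable def congMinusCount (d a n : ℕ) : ℕ :=
  Nat.card {p : n.Partition //
    (∀ x ∈ p.parts, x ≡ a [MOD d + 3] ∨ x + a ≡ 0 [MOD d + 3]) ∧
    ∀ x ∈ p.parts, x ≠ d + 3 - a}

/-- `Q_d^{(a,-,-)}(n)`: as `congCount`, but no part equals `a` or `d + 3 - a`. -/
noncomputable def congMinusMinusCount (d a n : ℕ) : ℕ :=
  Nat.card {p : n.Partition //
    (∀ x ∈ p.parts, x ≡ a [MOD d + 3] ∨ x + a ≡ 0 [MOD d + 3]) ∧
    (∀ x ∈ p.parts, x ≠ a) ∧ ∀ x ∈ p.parts, x ≠ d + 3 - a}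

/-- `ρ(R; n)`: the number of partitions of `n` all of whose parts lie in `R`. -/
noncomputable def rhoCount (R : Set ℕ) (n : ℕ) : ℕ :=
  Nat.card {p : n.Partition // ∀ x ∈ p.parts, x ∈ R}

/-- `h_n^{(a)}`: the least nonnegative residue of `-n` modulo `a`,
so that `n + negRes n a = a * ⌈n/a⌉`. -/
def negRes (n a : ℕ) : ℕ := (a - n % a) % a

/-- `⌈d/a⌉` for natural numbers. -/
def cdiv (d a : ℕ) : ℕ := (d + a - 1) / a

/-- Lists of parts at least `a` in increasing order with gaps at least `d` are counted by
`gapCount`. -/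
theorem card_le_gapCount {a d n : ℕ} (ha : 1 ≤ a) (S : Finset (List ℕ))
    (hS : ∀ l ∈ S, l.sum = n ∧ (∀ x ∈ l, a ≤ x) ∧ l.IsChain (fun x y => x + d ≤ y)) :
    S.card ≤ gapCount d a n := by
  have hsort : ∀ l ∈ S, (l : Multiset ℕ).sort (· ≤ ·) = l := by
    intro l hl
    have hp : l.Pairwise (· ≤ ·) :=
      List.isChain_iff_pairwise.1 ((hS l hl).2.2.imp fun x y h => by omega)
    rw [Multiset.coe_sort]
    exact List.mergeSort_eq_self _ (by simpa using hp)
  let f : S → {p : n.Partition // (∀ x ∈ p.parts, a ≤ x) ∧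
      List.Chain' (fun x y => x + d ≤ y) (p.parts.sort (· ≤ ·))} := fun l =>
    ⟨⟨(l.1 : Multiset ℕ), fun {i} hi => by
        have := (hS l.1 l.2).2.1 i (by simpa using hi)
        omega, by simpa using (hS l.1 l.2).1⟩,
      fun x hx => (hS l.1 l.2).2.1 x (by simpa using hx), by
        change List.IsChain _ ((l.1 : Multiset ℕ).sort (· ≤ ·))
        rw [hsort l.1 l.2]
        exact (hS l.1 l.2).2.2⟩
  have hf : Function.Injective f := by
    intro l l' h
    have h1 : (l.1 : Multiset ℕ) = (l'.1 : Multiset ℕ) :=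
      congrArg (fun q => q.1.parts) h
    apply Subtype.ext
    rw [← hsort l.1 l.2, ← hsort l'.1 l'.2, h1]
  have := Nat.card_le_card_of_injective f hf
  simpa [gapCount] using this

/-- A lower bound for `gapCount` from partitions with one part, with two parts, and with three
parts the least of which is `a`. -/
theorem le_gapCount {a d n : ℕ} (ha : 1 ≤ a) (han : a ≤ n) :
    1 + ((n - d) / 2 + 1 - a) + ((n - a - d) / 2 + 1 - (a + d)) ≤ gapCount d a n := by
  let S₁ : Finset (List ℕ) := {[n]}
  let S₂ : Finset (List ℕ) := (Finset.Icc a ((n - d) / 2)).image fun x => [x, n - x]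
  let S₃ : Finset (List ℕ) :=
    (Finset.Icc (a + d) ((n - a - d) / 2)).image fun y => [a, y, n - a - y]
  have h12 : Disjoint S₁ S₂ := by
    simp [S₁, S₂]
  have h123 : Disjoint (S₁ ∪ S₂) S₃ := by
    rw [Finset.disjoint_left]
    intro l hl hl'
    simp only [S₁, S₂, S₃, Finset.mem_union, Finset.mem_singleton, Finset.mem_image] at hl hl'
    obtain ⟨y, -, rfl⟩ := hl'
    simp at hl
  have hc₂ : S₂.card = (n - d) / 2 + 1 - a := by
    rw [Finset.card_image_of_injective _ (fun x y h => by simpa using (List.cons.inj h).1),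
      Nat.card_Icc]
  have hc₃ : S₃.card = (n - a - d) / 2 + 1 - (a + d) := by
    rw [Finset.card_image_of_injective _
      (fun x y h => (List.cons.inj (List.cons.inj h).2).1), Nat.card_Icc]
  have hcard : (S₁ ∪ S₂ ∪ S₃).card =
      1 + ((n - d) / 2 + 1 - a) + ((n - a - d) / 2 + 1 - (a + d)) := by
    rw [Finset.card_union_of_disjoint h123, Finset.card_union_of_disjoint h12, hc₂, hc₃]
    simp [S₁]
  rw [← hcard]
  apply card_le_gapCount ha
  intro l hl
  simp only [S₁, S₂, S₃, Finset.mem_union, Finset.mem_singleton, Finset.mem_image,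
    Finset.mem_Icc] at hl
  rcases hl with (rfl | ⟨x, hx, rfl⟩) | ⟨y, hy, rfl⟩
  · simpa using han
  · simp
    omega
  · simp
    omega

/-- The parts below `6 * m - a` that are congruent to `a` or `-a` modulo `m` and different from
`m - a`, in increasing order. -/
def smallPart (m a : ℕ) : Fin 10 → ℕ :=
  ![a, m + a, 2 * m - a, 2 * m + a, 3 * m - a, 3 * m + a, 4 * m - a, 4 * m + a, 5 * m - a,
    5 * m + a]

theorem smallPart_injective {m a : ℕ} (ha : 1 ≤ a) (h : 2 * a < m) :
    Function.Injective (smallPart m a) := by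
  apply StrictMono.injective
  rw [Fin.strictMono_iff_lt_succ]
  intro i
  fin_cases i <;> simp [smallPart] <;> omega

theorem exists_smallPart_eq {m a x : ℕ} (ha : 1 ≤ a) (h : 2 * a < m) (hx : 0 < x)
    (hx6 : x + a < 6 * m) (hmod : x ≡ a [MOD m] ∨ x + a ≡ 0 [MOD m]) (hne : x ≠ m - a) :
    ∃ i, smallPart m a i = x := by
  rcases hmod with hmod | hmod
  · have h1 : x % m = a := by
      rw [hmod, Nat.mod_eq_of_lt (by omega)]
    have h2 := Nat.div_add_mod x m
    have h3 : x / m < 6 := by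
      rw [Nat.div_lt_iff_lt_mul (by omega)]
      omega
    rw [h1] at h2
    generalize x / m = k at h2 h3
    subst h2
    interval_cases k
    · exact ⟨0, by simp [smallPart]⟩
    · exact ⟨1, by simp [smallPart]⟩
    · exact ⟨3, by simp [smallPart, mul_comm]⟩
    · exact ⟨5, by simp [smallPart, mul_comm]⟩
    · exact ⟨7, by simp [smallPart, mul_comm]⟩
    · exact ⟨9, by simp [smallPart, mul_comm]⟩
  · obtain ⟨k, hk⟩ := (Nat.modEq_zero_iff_dvd).1 hmod
    have h3 : k < 6 := by
      by_contra hcon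
      have : m * 6 ≤ m * k := Nat.mul_le_mul_left m (by omega)
      omega
    interval_cases k
    · omega
    · omega
    · exact ⟨2, by simp [smallPart]; omega⟩
    · exact ⟨4, by simp [smallPart]; omega⟩
    · exact ⟨6, by simp [smallPart]; omega⟩
    · exact ⟨8, by simp [smallPart]; omega⟩

/-- The partitions counted by `congMinusCount`. -/
abbrev CongMinus (d a n : ℕ) : Type :=
  {p : n.Partition //
    (∀ x ∈ p.parts, x ≡ a [MOD d + 3] ∨ x + a ≡ 0 [MOD d + 3]) ∧
    ∀ x ∈ p.parts, x ≠ d + 3 - a}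

/-- The multiplicity of `smallPart (d + 3) a i` in a partition. -/
def partMult {d a n : ℕ} (p : CongMinus d a n) (i : Fin 10) : ℕ :=
  p.1.parts.count (smallPart (d + 3) a i)

theorem exists_smallPart_eq_of_mem {d a n : ℕ} (ha : 1 ≤ a) (h : 2 * a < d + 3)
    (hn : n + a < 6 * (d + 3)) (p : CongMinus d a n) {x : ℕ} (hx : x ∈ p.1.parts) :
    ∃ i, smallPart (d + 3) a i = x := by
  have hle : x ≤ n := by
    conv_rhs => rw [← p.1.parts_sum]
    exact Multiset.le_sum_of_mem hx
  exact exists_smallPart_eq ha h (p.1.parts_pos hx) (by omega) (p.2.1 x hx) (p.2.2 x hx)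

theorem sum_partMult {d a n : ℕ} (ha : 1 ≤ a) (h : 2 * a < d + 3)
    (hn : n + a < 6 * (d + 3)) (p : CongMinus d a n) :
    ∑ i, partMult p i * smallPart (d + 3) a i = n := by
  conv_rhs => rw [← p.1.parts_sum]
  have hsub : p.1.parts.toFinset ⊆ Finset.univ.image (smallPart (d + 3) a) := by
    intro x hx
    simpa using exists_smallPart_eq_of_mem ha h hn p (Multiset.mem_toFinset.1 hx)
  rw [Finset.sum_multiset_count_of_subset _ _ hsub,
    Finset.sum_image (smallPart_injective ha h).injOn]
  rfl

/-- A partition is determined by the multiplicities of its parts other than `a`. -/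
theorem partMult_succ_injective {d a n : ℕ} (ha : 1 ≤ a) (h : 2 * a < d + 3)
    (hn : n + a < 6 * (d + 3)) :
    Function.Injective fun (p : CongMinus d a n) (i : Fin 9) => partMult p i.succ := by
  intro p p' hpp
  have hsucc : ∀ i : Fin 9, partMult p i.succ = partMult p' i.succ := congrFun hpp
  have hzero : partMult p 0 = partMult p' 0 := by
    have h1 := sum_partMult ha h hn p
    have h2 := sum_partMult ha h hn p'
    rw [Fin.sum_univ_succ] at h1 h2
    simp only [hsucc] at h1
    have h3 : partMult p 0 * a = partMult p' 0 * a := by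
      simp only [smallPart, Matrix.cons_val_zero] at h1 h2
      omega
    exact Nat.eq_of_mul_eq_mul_right ha h3
  have hall : ∀ i, partMult p i = partMult p' i := Fin.cases hzero hsucc
  apply Subtype.ext
  apply Nat.Partition.ext
  ext x
  by_cases hx : ∃ i, smallPart (d + 3) a i = x
  · obtain ⟨i, rfl⟩ := hx
    exact hall i
  · rw [Multiset.count_eq_zero_of_notMem, Multiset.count_eq_zero_of_notMem]
    · exact fun hmem => hx (exists_smallPart_eq_of_mem ha h hn p' hmem)
    · exact fun hmem => hx (exists_smallPart_eq_of_mem ha h hn p hmem)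

/-- The multiple of `m` nearest to `smallPart m a i.succ`, divided by `m`. -/
def level : Fin 9 → ℕ := ![1, 2, 2, 3, 3, 4, 4, 5, 5]

/-- The multiplicity vectors of total level at most `J`. -/
def vectorsOfLevelLE (J : ℕ) : Finset (Fin 9 → ℕ) :=
  (Fintype.piFinset fun i => Finset.range (J / level i + 1)).filter
    fun c => ∑ i, level i * c i ≤ J

theorem mem_vectorsOfLevelLE {J : ℕ} {c : Fin 9 → ℕ} :
    c ∈ vectorsOfLevelLE J ↔ ∑ i, level i * c i ≤ J := by
  refine ⟨fun h => (Finset.mem_filter.1 h).2, fun h => Finset.mem_filter.2 ⟨?_, h⟩⟩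
  rw [Fintype.mem_piFinset]
  intro i
  have hpos : 0 < level i := by fin_cases i <;> simp [level]
  have hi : level i * c i ≤ J :=
    (Finset.single_le_sum (f := fun i => level i * c i) (fun _ _ => Nat.zero_le _)
      (Finset.mem_univ i)).trans h
  rw [Finset.mem_range, Nat.lt_succ_iff, Nat.le_div_iff_mul_le hpos, mul_comm]
  exact hi

theorem card_vectorsOfLevelLE_one : (vectorsOfLevelLE 1).card = 2 := by decide +kernel
theorem card_vectorsOfLevelLE_two : (vectorsOfLevelLE 2).card = 5 := by decide +kernel
theorem card_vectorsOfLevelLE_three : (vectorsOfLevelLE 3).card = 10 := by decide +kernel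
theorem card_vectorsOfLevelLE_four : (vectorsOfLevelLE 4).card = 20 := by decide +kernel
theorem card_vectorsOfLevelLE_five : (vectorsOfLevelLE 5).card = 36 := by decide +kernel

theorem level_sum_mul_le {d a n : ℕ} (ha : 1 ≤ a) (h : 2 * a < d + 3)
    (hn : n + a < 6 * (d + 3)) (p : CongMinus d a n) :
    (∑ i, level i * partMult p i.succ) * (2 * (d + 3) - a) ≤ 2 * n := by
  have hs := sum_partMult ha h hn p
  rw [Fin.sum_univ_succ] at hs
  have hterm : ∀ i : Fin 9, level i * partMult p i.succ * (2 * (d + 3) - a) ≤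
      2 * (partMult p i.succ * smallPart (d + 3) a i.succ) := by
    intro i
    have hi : level i * (2 * (d + 3) - a) ≤ 2 * smallPart (d + 3) a i.succ := by
      fin_cases i <;> simp [level, smallPart] <;> omega
    calc _ = partMult p i.succ * (level i * (2 * (d + 3) - a)) := by ring
      _ ≤ partMult p i.succ * (2 * smallPart (d + 3) a i.succ) :=
        Nat.mul_le_mul_left _ hi
      _ = _ := by ring
  calc _ = ∑ i, level i * partMult p i.succ * (2 * (d + 3) - a) := Finset.sum_mul ..
    _ ≤ ∑ i : Fin 9, 2 * (partMult p i.succ * smallPart (d + 3) a i.succ) :=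
      Finset.sum_le_sum fun i _ => hterm i
    _ = 2 * ∑ i : Fin 9, partMult p i.succ * smallPart (d + 3) a i.succ :=
      (Finset.mul_sum ..).symm
    _ ≤ 2 * n := by omega

theorem level_sum_le {d a n J : ℕ} (ha : 1 ≤ a) (h : 2 * a < d + 3)
    (hn : n + a < 6 * (d + 3)) (hJ : 2 * n < (J + 1) * (2 * (d + 3) - a))
    (p : CongMinus d a n) : ∑ i, level i * partMult p i.succ ≤ J := by
  have hp := level_sum_mul_le ha h hn p
  exact Nat.lt_succ_iff.1 (lt_of_mul_lt_mul_right (hp.trans_lt hJ) (Nat.zero_le _))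

theorem congMinusCount_le {d a n J : ℕ} (ha : 1 ≤ a) (h : 2 * a < d + 3)
    (hn : n + a < 6 * (d + 3)) (hJ : 2 * n < (J + 1) * (2 * (d + 3) - a)) :
    congMinusCount d a n ≤ (vectorsOfLevelLE J).card := by
  let f : CongMinus d a n → vectorsOfLevelLE J := fun p =>
    ⟨fun i => partMult p i.succ, mem_vectorsOfLevelLE.2 (level_sum_le ha h hn hJ p)⟩
  have hf : Function.Injective f := fun p p' hpp =>
    partMult_succ_injective ha h hn (congrArg Subtype.val hpp)
  have := Nat.card_le_card_of_injective f hf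
  simpa [congMinusCount] using this

/-- When `n < d + 2 * a`, the only partitions that can be counted are `a + ⋯ + a` and
`(d + 3 + a) + a + ⋯ + a`, and they exclude each other. -/
theorem congMinusCount_le_one {d a n : ℕ} (ha : 1 ≤ a) (h3 : 3 * a < d + 3)
    (hn : n < d + 2 * a) (hne : a ∣ d + 3 → n ≠ d + 3 + a) : congMinusCount d a n ≤ 1 := by
  have h : 2 * a < d + 3 := by omega
  have hn6 : n + a < 6 * (d + 3) := by omega
  have hJ : 2 * n < (1 + 1) * (2 * (d + 3) - a) := by omega
  have key : ∀ p : CongMinus d a n, partMult p 1 ≤ 1 ∧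
      (∀ i : Fin 8, partMult p i.succ.succ = 0) ∧
      partMult p 0 * a + partMult p 1 * (d + 3 + a) = n := by
    intro p
    have h1 := level_sum_le ha h hn6 hJ p
    have h2 := sum_partMult ha h hn6 p
    rw [Fin.sum_univ_succ] at h1
    rw [Fin.sum_univ_succ, Fin.sum_univ_succ] at h2
    have hz : ∀ i : Fin 8, partMult p i.succ.succ = 0 := by
      intro i
      have hi := Finset.single_le_sum
        (f := fun i : Fin 8 => level i.succ * partMult p i.succ.succ)
        (fun _ _ => Nat.zero_le _) (Finset.mem_univ i)
      have hl : 2 ≤ level i.succ := by fin_cases i <;> simp [level]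
      by_contra hcon
      have := Nat.mul_le_mul hl (Nat.one_le_iff_ne_zero.2 hcon)
      omega
    simp only [hz, zero_mul, mul_zero, Finset.sum_const_zero, add_zero] at h1 h2
    refine ⟨by simpa [level] using h1, hz, ?_⟩
    simpa [smallPart] using h2
  have hnot : ∀ p p' : CongMinus d a n, partMult p 1 = 0 → partMult p' 1 = 1 →
      False := by
    intro p p' h0 h1
    have hp := (key p).2.2
    have hp' := (key p').2.2
    rw [h0] at hp
    rw [h1] at hp'
    have hzero : partMult p' 0 = 0 := by
      by_contra hcon
      have := Nat.mul_le_mul_right a (Nat.one_le_iff_ne_zero.2 hcon)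
      omega
    rw [hzero] at hp'
    refine hne ?_ (by omega)
    have hdvd : a ∣ d + 3 + a := ⟨partMult p 0, by rw [mul_comm]; omega⟩
    exact (Nat.dvd_add_left dvd_rfl).1 hdvd
  have hsub : Subsingleton (CongMinus d a n) := by
    refine ⟨fun p p' => partMult_succ_injective ha h hn6 (funext ?_)⟩
    refine Fin.cases ?_ fun i => ?_
    · change partMult p 1 = partMult p' 1
      rcases Nat.le_one_iff_eq_zero_or_eq_one.1 (key p).1 with h1 | h1 <;>
        rcases Nat.le_one_iff_eq_zero_or_eq_one.1 (key p').1 with h2 | h2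
      · rw [h1, h2]
      · exact (hnot p p' h1 h2).elim
      · exact (hnot p' p h2 h1).elim
      · rw [h1, h2]
    · change partMult p i.succ.succ = partMult p' i.succ.succ
      rw [(key p).2.1 i, (key p').2.1 i]
  exact Finite.card_le_one_iff_subsingleton.2 hsub

theorem congMinusCount_eq_zero {d a n : ℕ} (h : a < d + 3) (hn : 1 ≤ n) (hna : n < a) :
    congMinusCount d a n = 0 := by
  have : IsEmpty (CongMinus d a n) := by
    refine ⟨fun p => ?_⟩
    have hle : ∀ x ∈ p.1.parts, a ≤ x := by
      intro x hx
      have hpos := p.1.parts_pos hx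
      by_contra hcon
      rcases p.2.1 x hx with hmod | hmod
      · exact hcon (hmod.eq_of_lt_of_lt (by omega) h).ge
      · have h2 := p.2.2 x hx
        obtain ⟨k, hk⟩ := (Nat.modEq_zero_iff_dvd).1 hmod
        have h3 : k < 2 := by
          by_contra hk2
          have : (d + 3) * 2 ≤ (d + 3) * k := Nat.mul_le_mul_left _ (by omega)
          omega
        interval_cases k <;> omega
    have hne : p.1.parts ≠ 0 := by
      intro h0
      have := p.1.parts_sum
      rw [h0] at this
      simp at this
      omega
    obtain ⟨x, hx⟩ := Multiset.exists_mem_of_ne_zero hne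
    have h1 := Multiset.le_sum_of_mem hx
    rw [p.1.parts_sum] at h1
    have h2 := hle x hx
    omega
  exact Nat.card_of_isEmpty

theorem congMinusCount_le_gapCount {a d n : ℕ} (ha : 1 ≤ a) (hd : 11 * a + 1 ≤ d)
    (hn : 1 ≤ n) (hn5 : n + 5 ≤ 5 * d + 5 * a) (hne : a ∣ d + 3 → n ≠ d + 3 + a) :
    congMinusCount d a n ≤ gapCount d a n := by
  have h : 2 * a < d + 3 := by omega
  have hn6 : n + a < 6 * (d + 3) := by omega
  rcases lt_or_ge n a with hna | han
  · rw [congMinusCount_eq_zero (by omega) hn hna]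
    exact Nat.zero_le _
  refine le_trans ?_ (le_gapCount ha han)
  rcases lt_or_ge n (d + 2 * a) with h0 | h0
  · exact (congMinusCount_le_one ha (by omega) h0 hne).trans (by omega)
  rcases lt_or_ge (2 * n) (2 * (2 * (d + 3) - a)) with h2 | h2
  · refine (congMinusCount_le (J := 1) ha h hn6 (by omega)).trans ?_
    rw [card_vectorsOfLevelLE_one]
    omega
  rcases lt_or_ge (2 * n) (3 * (2 * (d + 3) - a)) with h3 | h3
  · refine (congMinusCount_le (J := 2) ha h hn6 (by omega)).trans ?_
    rw [card_vectorsOfLevelLE_two]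
    omega
  rcases lt_or_ge (2 * n) (4 * (2 * (d + 3) - a)) with h4 | h4
  · refine (congMinusCount_le (J := 3) ha h hn6 (by omega)).trans ?_
    rw [card_vectorsOfLevelLE_three]
    omega
  rcases lt_or_ge (2 * n) (5 * (2 * (d + 3) - a)) with h5 | h5
  · refine (congMinusCount_le (J := 4) ha h hn6 (by omega)).trans ?_
    rw [card_vectorsOfLevelLE_four]
    omega
  · refine (congMinusCount_le (J := 5) ha h hn6 (by omega)).trans ?_
    rw [card_vectorsOfLevelLE_five]
    omega

theorem stmt5 (a d n : ℕ) (ha : 1 ≤ a) (hd : 1 ≤ d) (hceil : 12 ≤ cdiv d a)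
    (hn : 1 ≤ n) (hn2 : cdiv n a ≤ 5 * cdiv d a) :
    (¬ a ∣ d + 3 → congMinusCount d a n ≤ gapCount d a n) ∧
    (a ∣ d + 3 → n ≠ d + 3 + a → congMinusCount d a n ≤ gapCount d a n) := by
  have hd11 : 11 * a + 1 ≤ d := by
    have := (Nat.le_div_iff_mul_le ha).1 hceil
    omega
  have hn5 : n + 5 ≤ 5 * d + 5 * a := by
    have h1 : cdiv d a * a ≤ d + a - 1 := Nat.div_mul_le_self _ _
    have h2 : n + a - 1 < a * (cdiv n a + 1) := Nat.lt_mul_div_succ _ ha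
    have h3 := Nat.mul_le_mul_left a (Nat.add_le_add_right hn2 1)
    have h4 : a * (5 * cdiv d a + 1) = 5 * (cdiv d a * a) + a := by ring
    omega
  exact ⟨fun hdvd => congMinusCount_le_gapCount ha hd11 hn hn5 fun hdvd' => absurd hdvd' hdvd,
    fun _ hne => congMinusCount_le_gapCount ha hd11 hn hn5 fun _ => hne⟩
end

section
/- For all integers d with d = 31 or d ≥ 63, and all integers n ≥ d + 2, one has q_d^{(1)}(n) ≥ Q_{d−3}^{(1,-)}(n). -/
/-- The number of ascending sequences of length `t` with sum `n`, all terms at least `m` and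
consecutive terms differing by at least `d`. -/
def gapSeqCount (d : ℕ) : ℕ → ℕ → ℕ → ℕ
  | 0, _, n => if n = 0 then 1 else 0
  | t + 1, m, n => ∑ a ∈ Finset.Icc m n, gapSeqCount d t (a + d) (n - a)

/-- The ascending sequences counted by `gapSeqCount`. -/
def gapSeqs (d : ℕ) : ℕ → ℕ → ℕ → Finset (List ℕ)
  | 0, _, n => if n = 0 then {[]} else ∅
  | t + 1, m, n => (Finset.Icc m n).biUnion fun a =>
      (gapSeqs d t (a + d) (n - a)).map ⟨List.cons a, List.cons_injective⟩

theorem card_gapSeqs (d t m n : ℕ) : (gapSeqs d t m n).card = gapSeqCount d t m n := by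
  induction t generalizing m n with
  | zero => unfold gapSeqs gapSeqCount; split_ifs <;> simp
  | succ t ih =>
    unfold gapSeqs gapSeqCount
    rw [Finset.card_biUnion]
    · simp [ih]
    · intro a _ b _ hab
      rw [Function.onFun, Finset.disjoint_left]
      simp only [Finset.mem_map, Function.Embedding.coeFn_mk]
      rintro _ ⟨l, -, rfl⟩ ⟨l', -, h⟩
      exact hab (List.cons.inj h).1.symm

theorem of_mem_gapSeqs {d t m n : ℕ} {l : List ℕ} (h : l ∈ gapSeqs d t m n) :
    l.length = t ∧ l.sum = n ∧ (∀ x ∈ l, m ≤ x) ∧ l.IsChain (fun x y => x + d ≤ y) := by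
  induction t generalizing m n l with
  | zero =>
    unfold gapSeqs at h
    split_ifs at h <;> simp_all
  | succ t ih =>
    simp only [gapSeqs, Finset.mem_biUnion, Finset.mem_map, Finset.mem_Icc,
      Function.Embedding.coeFn_mk] at h
    obtain ⟨a, ⟨hma, han⟩, l, hl, rfl⟩ := h
    obtain ⟨h1, h2, h3, h4⟩ := ih hl
    refine ⟨by simp [h1], by simp [h2]; omega, ?_, ?_⟩
    · intro x hx
      rcases List.mem_cons.1 hx with rfl | hx
      · exact hma
      · have := h3 x hx
        omega
    · rw [List.isChain_cons]
      exact ⟨fun y hy => h3 y (List.mem_of_mem_head? hy), h4⟩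

theorem sum_gapSeqCount_le_gapCount (d n N : ℕ) :
    ∑ t ∈ Finset.range N, gapSeqCount d t 1 n ≤ gapCount d 1 n := by
  classical
  have hcard : ((Finset.range N).biUnion fun t => gapSeqs d t 1 n).card =
      ∑ t ∈ Finset.range N, gapSeqCount d t 1 n := by
    rw [Finset.card_biUnion]
    · simp [card_gapSeqs]
    · intro s _ t _ hst
      rw [Function.onFun, Finset.disjoint_left]
      intro l hs ht
      exact hst ((of_mem_gapSeqs hs).1.symm.trans (of_mem_gapSeqs ht).1)
  rw [← hcard, gapCount, ← Nat.card_eq_finsetCard]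
  have key : ∀ l ∈ (Finset.range N).biUnion fun t => gapSeqs d t 1 n,
      l.sum = n ∧ (∀ x ∈ l, 1 ≤ x) ∧ l.IsChain (fun x y => x + d ≤ y) := by
    intro l hl
    obtain ⟨t, -, hl⟩ := Finset.mem_biUnion.1 hl
    exact (of_mem_gapSeqs hl).2
  have hsort : ∀ l : List ℕ, l.IsChain (fun x y => x + d ≤ y) →
      (l : Multiset ℕ).sort (· ≤ ·) = l := by
    intro l hl
    rw [Multiset.coe_sort]
    refine List.mergeSort_of_pairwise (le := fun a b => decide (a ≤ b)) ?_
    simpa using (hl.imp (S := (· ≤ ·)) fun a b h => by omega).pairwise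
  refine Nat.card_le_card_of_injective
    (fun l => ⟨⟨(l.1 : Multiset ℕ), fun {x} hx => (key l.1 l.2).2.1 x (by simpa using hx),
      by simpa using (key l.1 l.2).1⟩, ?_, ?_⟩) ?_
  · intro x hx
    exact (key l.1 l.2).2.1 x (by simpa using hx)
  · dsimp only
    rw [hsort _ (key l.1 l.2).2.2]
    exact (key l.1 l.2).2.2
  · intro l l' h
    have h' : (l.1 : Multiset ℕ) = (l'.1 : Multiset ℕ) :=
      congrArg (fun p => p.1.parts) h
    apply Subtype.ext
    rw [← hsort _ (key l.1 l.2).2.2, h', hsort _ (key l'.1 l'.2).2.2]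

theorem gapSeqCount_one (d m n : ℕ) : gapSeqCount d 1 m n = if m ≤ n then 1 else 0 := by
  simp only [gapSeqCount]
  rw [Finset.sum_congr rfl (g := fun a => if a = n then 1 else 0)]
  · simp
  · intro a ha
    have := (Finset.mem_Icc.1 ha).2
    congr 1
    simp only [eq_iff_iff]; omega

theorem gapSeqCount_scale {c d : ℕ} (hc : 0 < c) (hcd : c ≤ d) (t : ℕ) {m m' M n : ℕ}
    (hm : c * m' ≤ d * m) (hM : d * M ≤ c * n) :
    gapSeqCount c (t + 1) m M ≤ gapSeqCount d (t + 1) m' n := by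
  induction t generalizing m m' M n with
  | zero =>
    rw [gapSeqCount_one, gapSeqCount_one]
    split_ifs with h1 h2 <;> try omega
    exact absurd (Nat.le_of_mul_le_mul_left (hm.trans ((Nat.mul_le_mul_left d h1).trans hM)) hc) h2
  | succ t ih =>
    rw [gapSeqCount, gapSeqCount.eq_2 d]
    have hdiv : ∀ a, c * (a * d / c) ≤ d * a := fun a => by
      rw [mul_comm d]; exact Nat.mul_div_le _ _
    calc _ ≤ ∑ a ∈ Finset.Icc m M, gapSeqCount d (t + 1) (a * d / c + d) (n - a * d / c) := by
          refine Finset.sum_le_sum fun a ha => ih ?_ ?_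
          · have := hdiv a
            nlinarith
          · have := hdiv a
            rw [Nat.mul_sub, Nat.mul_sub]
            omega
      _ = ∑ b ∈ (Finset.Icc m M).image (fun a => a * d / c),
            gapSeqCount d (t + 1) (b + d) (n - b) := by
          rw [Finset.sum_image]
          have hmono : StrictMono fun a => a * d / c := by
            refine strictMono_nat_of_lt_succ fun a => ?_
            rw [Nat.lt_iff_add_one_le, ← Nat.add_div_right _ hc]
            exact Nat.div_le_div_right (by nlinarith)
          exact hmono.injective.injOn
      _ ≤ _ := by
          refine Finset.sum_le_sum_of_subset fun b hb => ?_
          obtain ⟨a, ha, rfl⟩ := Finset.mem_image.1 hb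
          rw [Finset.mem_Icc] at ha ⊢
          constructor
          · rw [Nat.le_div_iff_mul_le hc]
            nlinarith
          · exact Nat.le_of_mul_le_mul_left
              ((hdiv a).trans ((Nat.mul_le_mul_left d ha.2).trans hM)) hc

open PowerSeries

/-- The geometric series `1 / (1 - X ^ i)`. -/
noncomputable def geomSeries (i : ℕ) : ℤ⟦X⟧ := mk fun n => if i ∣ n then 1 else 0

theorem one_sub_X_pow_mul_geomSeries {i : ℕ} (hi : 0 < i) :
    (1 - X ^ i) * geomSeries i = 1 := by
  ext n
  rw [sub_mul, one_mul, map_sub, coeff_X_pow_mul', geomSeries, coeff_mk, coeff_mk, coeff_one]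
  by_cases hn : n = 0
  · subst hn
    simp [hi.ne']
  · rw [if_neg hn]
    by_cases hin : i ≤ n
    · have h : i ∣ n - i ↔ i ∣ n := by
        rw [← Nat.dvd_add_left (dvd_refl i), Nat.sub_add_cancel hin]
      simp [hin, h]
    · rw [if_neg hin, if_neg fun h => hin (Nat.le_of_dvd (by omega) h), sub_zero]

/-- Coefficientwise inequality of power series. -/
def CoeffLE (f g : ℤ⟦X⟧) : Prop := ∀ n, coeff n f ≤ coeff n g

namespace CoeffLE

variable {f g h k : ℤ⟦X⟧}

theorem refl (f : ℤ⟦X⟧) : CoeffLE f f := fun _ => le_rfl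

theorem trans (hfg : CoeffLE f g) (hgh : CoeffLE g h) : CoeffLE f h :=
  fun n => (hfg n).trans (hgh n)

theorem add (hfg : CoeffLE f g) (hhk : CoeffLE h k) : CoeffLE (f + h) (g + k) := fun n => by
  simpa using add_le_add (hfg n) (hhk n)

theorem mul_left (hh : CoeffLE 0 h) (hfg : CoeffLE f g) : CoeffLE (h * f) (h * g) := fun n => by
  simp only [coeff_mul]
  exact Finset.sum_le_sum fun p _ =>
    mul_le_mul_of_nonneg_left (hfg _) (by simpa using hh p.1)

theorem mul_nonneg (hf : CoeffLE 0 f) (hg : CoeffLE 0 g) : CoeffLE 0 (f * g) := by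
  simpa using mul_left hf hg

theorem sum {ι : Type*} {s : Finset ι} {f g : ι → ℤ⟦X⟧} (hfg : ∀ i ∈ s, CoeffLE (f i) (g i)) :
    CoeffLE (∑ i ∈ s, f i) (∑ i ∈ s, g i) := fun n => by
  simpa using Finset.sum_le_sum fun i hi => hfg i hi n

theorem X_pow_nonneg (k : ℕ) : CoeffLE 0 (X ^ k) := fun n => by
  rw [coeff_X_pow, map_zero]
  split_ifs <;> simp

theorem geomSeries_nonneg (i : ℕ) : CoeffLE 0 (geomSeries i) := fun n => by
  rw [geomSeries, coeff_mk, map_zero]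
  split_ifs <;> simp

end CoeffLE

/-- The generating function of sequences of length `t` with terms at least `m` and gaps at
least `31`. -/
noncomputable def gapSeries (t m : ℕ) : ℤ⟦X⟧ :=
  X ^ (m * t + 31 * t.choose 2) * ∏ i ∈ Finset.range t, geomSeries (i + 1)

theorem gapSeries_zero (m : ℕ) : gapSeries 0 m = 1 := by simp [gapSeries]

theorem gapSeries_succ_sub (t m : ℕ) :
    gapSeries (t + 1) m - gapSeries (t + 1) (m + 1) = X ^ m * gapSeries t (m + 31) := by
  have h := one_sub_X_pow_mul_geomSeries (i := t + 1) t.succ_pos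
  have hc : (t + 1).choose 2 = t + t.choose 2 := by
    rw [Nat.choose_succ_succ' t 1, Nat.choose_one_right]
  simp only [gapSeries, Finset.prod_range_succ, hc]
  have e : (X : ℤ⟦X⟧) ^ ((m + 1) * (t + 1) + 31 * (t + t.choose 2)) =
      X ^ (m * (t + 1) + 31 * (t + t.choose 2)) * X ^ (t + 1) := by
    rw [← pow_add]; congr 1; ring
  have e' : (X : ℤ⟦X⟧) ^ (m * (t + 1) + 31 * (t + t.choose 2)) =
      X ^ m * X ^ ((m + 31) * t + 31 * t.choose 2) := by
    rw [← pow_add]; congr 1; ring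
  rw [e, e']
  linear_combination (X ^ m * X ^ ((m + 31) * t + 31 * t.choose 2) *
    ∏ i ∈ Finset.range t, geomSeries (i + 1)) * h

theorem gapSeries_add (t m : ℕ) : gapSeries t (m + 31) = X ^ (31 * t) * gapSeries t m := by
  rw [gapSeries, gapSeries, ← mul_assoc, ← pow_add]
  congr 2
  ring

theorem gapSeries_nonneg (t m : ℕ) : CoeffLE 0 (gapSeries t m) := by
  refine (CoeffLE.X_pow_nonneg _).mul_nonneg ?_
  refine Finset.prod_induction _ (CoeffLE 0) (fun _ _ => CoeffLE.mul_nonneg) ?_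
    fun i _ => CoeffLE.geomSeries_nonneg _
  simpa using CoeffLE.X_pow_nonneg 0

theorem gapSeries_antitone (t : ℕ) {m m' : ℕ} (h : m ≤ m') :
    CoeffLE (gapSeries t m') (gapSeries t m) := by
  induction h with
  | refl => exact CoeffLE.refl _
  | @step m' _ ih =>
    refine CoeffLE.trans ?_ ih
    cases t with
    | zero => simpa only [gapSeries_zero] using CoeffLE.refl _
    | succ t =>
      rw [← sub_add_cancel (gapSeries (t + 1) m') (gapSeries (t + 1) (m' + 1)),
        gapSeries_succ_sub]
      simpa using ((CoeffLE.X_pow_nonneg m').mul_nonneg (gapSeries_nonneg t (m' + 31))).add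
        (CoeffLE.refl (gapSeries (t + 1) (m' + 1)))

theorem sum_Ico_gapSeries (t : ℕ) {m m' : ℕ} (h : m ≤ m') :
    ∑ a ∈ Finset.Ico m m', X ^ a * gapSeries t (a + 31) =
      gapSeries (t + 1) m - gapSeries (t + 1) m' := by
  simp only [← gapSeries_succ_sub]
  rw [← neg_inj, ← Finset.sum_neg_distrib]
  simp only [neg_sub]
  exact Finset.sum_Ico_sub _ h

theorem coeff_gapSeries (t m n : ℕ) : coeff n (gapSeries t m) = gapSeqCount 31 t m n := by
  induction t generalizing m n with
  | zero => simp [gapSeries_zero, gapSeqCount, coeff_one]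
  | succ t ih =>
    have hlt : ∀ m', n < m' → coeff n (gapSeries (t + 1) m') = 0 := by
      intro m' hm'
      rw [gapSeries, coeff_X_pow_mul', if_neg]
      nlinarith
    rw [gapSeqCount]
    by_cases hmn : m ≤ n
    · have h := congrArg (coeff n) (sum_Ico_gapSeries t (m := m) (m' := n + 1) (by omega))
      rw [map_sub, hlt _ n.lt_succ_self, sub_zero, map_sum] at h
      rw [← h, Nat.cast_sum]
      refine Finset.sum_congr rfl fun a ha => ?_
      rw [coeff_X_pow_mul', if_pos (by simp at ha; omega), ih]
    · rw [hlt _ (by omega), Finset.Icc_eq_empty hmn]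
      simp

/-- The series with `andrewsSum t g (c + 1) - andrewsSum t g c` equal to
`X ^ (2 ^ c + 31 * t) * (andrewsSum t g c + g c)`. -/
noncomputable def andrewsSum (t : ℕ) (g : ℕ → ℤ⟦X⟧) : ℕ → ℤ⟦X⟧
  | 0 => 0
  | c + 1 => andrewsSum t g c + X ^ (2 ^ c + 31 * t) * (andrewsSum t g c + g c)

/-- The auxiliary series of Andrews: a coefficientwise lower bound for the generating function of sequences
of length `t` with terms at least `2 ^ c` and gaps at least `31`. -/
noncomputable def andrewsSeries : ℕ → ℕ → ℤ⟦X⟧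
  | 0, _ => 1
  | t + 1, c => geomSeries (31 * (t + 1)) * andrewsSum t (andrewsSeries t) 5 -
      andrewsSum t (andrewsSeries t) c

theorem X_pow_dvd_andrewsSeries (t c : ℕ) : X ^ t ∣ andrewsSeries t c := by
  induction t generalizing c with
  | zero => simp
  | succ t ih =>
    have h : ∀ c, X ^ (t + 1) ∣ andrewsSum t (andrewsSeries t) c := by
      intro c
      induction c with
      | zero => exact dvd_zero _
      | succ c ihc =>
        refine dvd_add ihc ?_
        rw [mul_add]
        refine dvd_add (ihc.mul_left _) ?_
        rw [pow_succ']
        refine mul_dvd_mul ?_ (ih c)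
        exact dvd_pow_self _ (by have := Nat.two_pow_pos c; omega)
    rw [andrewsSeries]
    exact dvd_sub ((h 5).mul_left _) (h c)

section Bound

variable {t : ℕ} {g : ℕ → ℤ⟦X⟧}

theorem andrewsSum_le (hg : ∀ c ≤ 5, CoeffLE (g c) (gapSeries t (2 ^ c))) {c : ℕ} (hc : c ≤ 5) :
    CoeffLE (andrewsSum t g c) (∑ m ∈ Finset.Ico 1 (2 ^ c), X ^ m * gapSeries t 32) := by
  induction c with
  | zero => simpa [andrewsSum] using CoeffLE.refl 0
  | succ c ih =>
    have hpos := Nat.two_pow_pos c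
    have hU := ih (by omega)
    have e : ∑ m ∈ Finset.Ico 1 (2 ^ (c + 1)), X ^ m * gapSeries t 32 =
        ∑ m ∈ Finset.Ico 1 (2 ^ c), X ^ m * gapSeries t 32 +
        X ^ 2 ^ c * (∑ m ∈ Finset.Ico 1 (2 ^ c), X ^ m * gapSeries t 32 + gapSeries t 32) := by
      rw [← Finset.sum_Ico_consecutive _ hpos (Nat.pow_le_pow_right two_pos c.le_succ),
        Finset.sum_eq_sum_Ico_succ_bot (Nat.pow_lt_pow_succ one_lt_two), mul_add,
        add_comm (X ^ 2 ^ c * _), Finset.mul_sum]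
      congr 2
      rw [pow_succ, mul_two, add_comm (2 ^ c) 1, ← Finset.sum_Ico_add]
      exact Finset.sum_congr rfl fun m _ => by rw [pow_add, mul_assoc]
    rw [andrewsSum, e, pow_add, mul_assoc, mul_add]
    refine hU.add ((CoeffLE.X_pow_nonneg _).mul_left (CoeffLE.add ?_ ?_))
    · refine ((CoeffLE.X_pow_nonneg _).mul_left hU).trans ?_
      rw [Finset.mul_sum]
      refine CoeffLE.sum fun m _ => ?_
      rw [mul_left_comm, ← gapSeries_add]
      exact (CoeffLE.X_pow_nonneg _).mul_left (gapSeries_antitone t (by omega))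
    · refine ((CoeffLE.X_pow_nonneg _).mul_left (hg c (by omega))).trans ?_
      rw [← gapSeries_add]
      exact gapSeries_antitone t (by omega)

theorem andrewsSum_succ_sub_le (hg : ∀ c ≤ 5, CoeffLE (g c) (gapSeries t (2 ^ c))) {c : ℕ}
    (hc : c < 5) :
    CoeffLE (andrewsSum t g (c + 1) - andrewsSum t g c)
      (gapSeries (t + 1) (2 ^ c) - gapSeries (t + 1) (2 ^ (c + 1))) := by
  have hpow : 2 ^ (c + 1) ≤ 2 ^ 5 := Nat.pow_le_pow_right two_pos hc
  have hpos := Nat.two_pow_pos c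
  rw [← sum_Ico_gapSeries t (Nat.pow_le_pow_right two_pos c.le_succ),
    Finset.sum_eq_sum_Ico_succ_bot (Nat.pow_lt_pow_succ one_lt_two), andrewsSum,
    add_sub_cancel_left, pow_add, mul_assoc, mul_add, mul_add, add_comm]
  refine CoeffLE.add ((CoeffLE.X_pow_nonneg _).mul_left ?_) ?_
  · rw [gapSeries_add]
    exact (CoeffLE.X_pow_nonneg _).mul_left (hg c hc.le)
  · refine ((CoeffLE.X_pow_nonneg _).mul_left
      ((CoeffLE.X_pow_nonneg _).mul_left (andrewsSum_le hg hc.le))).trans ?_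
    rw [pow_succ, mul_two, add_comm (2 ^ c) 1, ← Finset.sum_Ico_add, Finset.mul_sum,
      Finset.mul_sum]
    refine CoeffLE.sum fun m hm => ?_
    rw [mul_left_comm (X ^ (31 * t)), ← gapSeries_add, ← mul_assoc, ← pow_add]
    refine (CoeffLE.X_pow_nonneg _).mul_left (gapSeries_antitone t ?_)
    have := (Finset.mem_Ico.1 hm).2
    omega

theorem andrewsSum_sub_le (hg : ∀ c ≤ 5, CoeffLE (g c) (gapSeries t (2 ^ c))) {c : ℕ}
    (hc : c ≤ 5) :
    CoeffLE (andrewsSum t g 5 - andrewsSum t g c)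
      (gapSeries (t + 1) (2 ^ c) - gapSeries (t + 1) 32) := by
  induction hc using Nat.decreasingInduction with
  | self => simpa using CoeffLE.refl 0
  | of_succ c hc ih => simpa using ih.add (andrewsSum_succ_sub_le hg hc)

end Bound

theorem andrewsSeries_le (t : ℕ) {c : ℕ} (hc : c ≤ 5) :
    CoeffLE (andrewsSeries t c) (gapSeries t (2 ^ c)) := by
  induction t generalizing c with
  | zero => simpa [andrewsSeries, gapSeries_zero] using CoeffLE.refl 1
  | succ t ih =>
    have hgeo := one_sub_X_pow_mul_geomSeries (i := 31 * (t + 1)) (by omega)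
    have h32 := gapSeries_add (t + 1) 1
    have hU := andrewsSum_sub_le (fun c hc => ih hc) (Nat.zero_le 5)
    have hfull : CoeffLE (geomSeries (31 * (t + 1)) * andrewsSum t (andrewsSeries t) 5)
        (gapSeries (t + 1) 1) := by
      refine ((CoeffLE.geomSeries_nonneg _).mul_left (f := andrewsSum t (andrewsSeries t) 5)
        (g := gapSeries (t + 1) 1 - gapSeries (t + 1) 32) ?_).trans ?_
      · simpa [andrewsSum] using hU
      · rw [show geomSeries (31 * (t + 1)) * (gapSeries (t + 1) 1 - gapSeries (t + 1) 32) =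
          gapSeries (t + 1) 1 by rw [h32]; linear_combination gapSeries (t + 1) 1 * hgeo]
        exact CoeffLE.refl _
    have := ((CoeffLE.X_pow_nonneg (31 * (t + 1))).mul_left hfull).add
      (andrewsSum_sub_le (fun c hc => ih hc) hc)
    rw [← h32, add_sub_cancel] at this
    rw [andrewsSeries]
    convert this using 1
    linear_combination andrewsSum t (andrewsSeries t) 5 * hgeo

section Identity

/-- The reciprocal of the `q`-Pochhammer symbol `(q; q)_t` at `q = X ^ 31`. -/
noncomputable def invPochhammer (t : ℕ) : ℤ⟦X⟧ := ∏ i ∈ Finset.range t, geomSeries (31 * (i + 1))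

theorem one_sub_mul_invPochhammer (t : ℕ) :
    (1 - (X ^ 31) ^ (t + 1)) * invPochhammer (t + 1) = invPochhammer t := by
  have h := one_sub_X_pow_mul_geomSeries (i := 31 * (t + 1)) (by omega)
  rw [invPochhammer, Finset.prod_range_succ, ← invPochhammer, ← pow_mul]
  linear_combination invPochhammer t * h

/-- The convolution of the series of Andrews (at `c = 0`) with the reciprocal Pochhammer symbols. -/
noncomputable def andrewsConv (t : ℕ) : ℤ⟦X⟧ :=
  ∑ p ∈ Finset.HasAntidiagonal.antidiagonal t, andrewsSeries p.1 0 * invPochhammer p.2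

theorem andrewsSeries_succ_five (t : ℕ) :
    andrewsSeries (t + 1) 5 = (X ^ 31) ^ (t + 1) * andrewsSeries (t + 1) 0 := by
  have h := one_sub_X_pow_mul_geomSeries (i := 31 * (t + 1)) (by omega)
  have h0 : andrewsSum t (andrewsSeries t) 0 = 0 := rfl
  rw [andrewsSeries, andrewsSeries, h0, ← pow_mul]
  linear_combination andrewsSum t (andrewsSeries t) 5 * h

theorem andrewsSeries_succ_succ (t c : ℕ) :
    andrewsSeries (t + 1) (c + 1) = andrewsSeries (t + 1) c + X ^ 2 ^ c * (X ^ 31) ^ t *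
      (andrewsSeries (t + 1) c - andrewsSeries t c - andrewsSeries (t + 1) 0) := by
  have h0 : andrewsSum t (andrewsSeries t) 0 = 0 := rfl
  have hc : andrewsSum t (andrewsSeries t) (c + 1) = andrewsSum t (andrewsSeries t) c +
      X ^ (2 ^ c + 31 * t) * (andrewsSum t (andrewsSeries t) c + andrewsSeries t c) := rfl
  rw [andrewsSeries, andrewsSeries, andrewsSeries, h0, hc, ← pow_mul, pow_add]
  ring

theorem one_sub_mul_andrewsConv (t : ℕ) :
    (1 - (X ^ 31) ^ (t + 1)) * andrewsConv (t + 1) =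
      (∏ c ∈ Finset.range 5, (1 + X ^ (2 ^ c + 31 * t))) * andrewsConv t := by
  let q : ℤ⟦X⟧ := X ^ 31
  let φ : ℕ → ℤ⟦X⟧⟦X⟧ := fun c => mk fun t => andrewsSeries t c
  let ε : ℤ⟦X⟧⟦X⟧ := mk invPochhammer
  let K : ℤ⟦X⟧⟦X⟧ := φ 0 * ε
  let H : ℕ → ℤ⟦X⟧⟦X⟧ := fun c => φ c * rescale q ε
  have hq : q ≠ 0 := pow_ne_zero _ X_ne_zero
  have hK : ∀ t, coeff t K = andrewsConv t := fun t => by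
    simp [K, φ, ε, coeff_mul, andrewsConv]
  have hε : (1 - X) * ε = rescale q ε := by
    ext1 t
    cases t with
    | zero => simp [ε, sub_mul, coeff_rescale]
    | succ t =>
      rw [sub_mul, one_mul, map_sub, coeff_succ_X_mul, coeff_rescale, coeff_mk, coeff_mk]
      linear_combination one_sub_mul_invPochhammer t
  have hε' : (1 - C q * X) * rescale q ε = rescale q (rescale q ε) := by
    rw [← rescale_X, ← map_one (rescale q), ← map_sub, ← map_mul, hε]
  have hφ5 : φ 5 = rescale q (φ 0) := by
    ext1 t
    cases t with
    | zero => simp [φ, coeff_rescale, andrewsSeries]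
    | succ t => simpa only [φ, coeff_rescale, coeff_mk] using andrewsSeries_succ_five t
  have hφ : ∀ c, C q * φ (c + 1) = C q * φ c +
      C (X ^ 2 ^ c) * ((1 - C q * X) * rescale q (φ c) - rescale q (φ 0)) := by
    intro c
    ext1 t
    rw [map_add, coeff_C_mul, coeff_C_mul, coeff_C_mul, map_sub, sub_mul, one_mul, map_sub,
      mul_assoc, coeff_C_mul]
    cases t with
    | zero => simp [φ, coeff_rescale, andrewsSeries]
    | succ t =>
      rw [coeff_succ_X_mul, coeff_rescale, coeff_rescale, coeff_rescale]
      simp only [φ, coeff_mk]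
      rw [andrewsSeries_succ_succ]
      ring
  have hH : ∀ c, C q * H (c + 1) = C q * H c + C (X ^ 2 ^ c) * (rescale q (H c) - rescale q K) := by
    intro c
    simp only [H, K, map_mul]
    rw [← hε']
    linear_combination rescale q ε * hφ c
  have hHt : ∀ c, coeff (t + 1) (H (c + 1)) - coeff (t + 1) K =
      (1 + X ^ (2 ^ c + 31 * t)) * (coeff (t + 1) (H c) - coeff (t + 1) K) := by
    intro c
    have h := congrArg (coeff (t + 1)) (hH c)
    rw [map_add, coeff_C_mul, coeff_C_mul, coeff_C_mul, map_sub, coeff_rescale,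
      coeff_rescale] at h
    apply mul_left_cancel₀ hq
    rw [pow_add, pow_mul, ← show q = X ^ 31 from rfl]
    linear_combination h
  have hprod : ∀ c, coeff (t + 1) (H c) - coeff (t + 1) K =
      -(∏ i ∈ Finset.range c, (1 + X ^ (2 ^ i + 31 * t))) * andrewsConv t := by
    intro c
    induction c with
    | zero =>
      have h0 : H 0 = (1 - X) * K := by
        simp only [H, K]
        rw [← hε]
        ring
      rw [h0, sub_mul, one_mul, map_sub, coeff_succ_X_mul, hK, hK]
      simp
    | succ c ih =>
      rw [hHt, ih, Finset.prod_range_succ]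
      ring
  have h5 : H 5 = rescale q K := by simp only [H, K, hφ5, map_mul]
  have h := hprod 5
  rw [h5, coeff_rescale, hK] at h
  linear_combination -h

theorem prod_one_sub_mul_andrewsConv (t : ℕ) :
    (∏ i ∈ Finset.range t, (1 - (X ^ 31) ^ (i + 1))) * andrewsConv t =
      ∏ s ∈ Finset.range t, ∏ c ∈ Finset.range 5, (1 + X ^ (2 ^ c + 31 * s)) := by
  induction t with
  | zero => simp [andrewsConv, andrewsSeries, invPochhammer]
  | succ t ih =>
    rw [Finset.prod_range_succ, Finset.prod_range_succ, mul_assoc, one_sub_mul_andrewsConv, ← ih]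
    ring

end Identity

theorem X_pow_dvd_prod_sub_one {ι : Type*} {m : ℕ} {s : Finset ι} {e : ι → ℕ}
    (h : ∀ i ∈ s, m ≤ e i) : (X : ℤ⟦X⟧) ^ m ∣ ∏ i ∈ s, (1 - X ^ e i) - 1 := by
  classical
  induction s using Finset.induction_on with
  | empty => simp
  | insert a s ha ih =>
    rw [Finset.prod_insert ha]
    have h1 := ih fun i hi => h i (Finset.mem_insert_of_mem hi)
    have h2 : (X : ℤ⟦X⟧) ^ m ∣ X ^ e a * ∏ i ∈ s, (1 - X ^ e i) :=
      (pow_dvd_pow _ (h a (Finset.mem_insert_self _ _))).mul_right _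
    convert dvd_sub h1 h2 using 1
    ring

theorem coeff_eq_of_X_pow_dvd_sub {n : ℕ} {f g : ℤ⟦X⟧} (h : X ^ (n + 1) ∣ f - g) :
    coeff n f = coeff n g := by
  have := X_pow_dvd_iff.1 h n n.lt_succ_self
  rwa [map_sub, sub_eq_zero] at this

theorem prod_one_sub_mul_invPochhammer {s t : ℕ} (h : s ≤ t) :
    (∏ i ∈ Finset.range t, (1 - (X ^ 31) ^ (i + 1))) * invPochhammer s =
      ∏ i ∈ Finset.Ico s t, (1 - X ^ (31 * (i + 1))) := by
  simp only [← pow_mul]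
  rw [← Finset.prod_range_mul_prod_Ico _ h, mul_right_comm, invPochhammer,
    ← Finset.prod_mul_distrib, Finset.prod_congr rfl fun i _ =>
      one_sub_X_pow_mul_geomSeries (i := 31 * (i + 1)) (by omega), Finset.prod_const_one, one_mul]

theorem coeff_prod_one_add {n t : ℕ} (ht : 2 * n ≤ t) :
    coeff n (∏ s ∈ Finset.range t, ∏ c ∈ Finset.range 5, (1 + X ^ (2 ^ c + 31 * s)) : ℤ⟦X⟧) =
      ∑ s ∈ Finset.range (n + 1), coeff n (andrewsSeries s 0) := by
  rw [← map_sum, ← prod_one_sub_mul_andrewsConv]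
  apply coeff_eq_of_X_pow_dvd_sub
  rw [andrewsConv, Finset.Nat.sum_antidiagonal_eq_sum_range_succ
    (fun i j => andrewsSeries i 0 * invPochhammer j), Finset.mul_sum,
    ← Finset.sum_range_add_sum_Ico _ (show n + 1 ≤ t.succ by omega), add_sub_right_comm,
    ← Finset.sum_sub_distrib]
  refine dvd_add (Finset.dvd_sum fun s hs => ?_) (Finset.dvd_sum fun s hs => ?_)
  · rw [mul_left_comm, prod_one_sub_mul_invPochhammer (Nat.sub_le _ _), ← mul_sub_one]
    refine (X_pow_dvd_prod_sub_one fun i hi => ?_).mul_left _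
    simp only [Finset.mem_Ico, Finset.mem_range] at hi hs
    omega
  · refine (Dvd.dvd.mul_right ?_ _).mul_left _
    exact (pow_dvd_pow _ (Finset.mem_Ico.1 hs).1).trans (X_pow_dvd_andrewsSeries s 0)

/-- The residues modulo `62` of the parts in the partition inequality of Andrews. -/
def andrewsResidues : Finset ℕ := {1, 33, 35, 39, 47}

theorem prod_one_add_mul_prod_one_sub (t : ℕ) :
    (∏ s ∈ Finset.range (2 * t), ∏ c ∈ Finset.range 5, (1 + X ^ (2 ^ c + 31 * s))) *
      ∏ j ∈ Finset.range t, ∏ y ∈ andrewsResidues, (1 - X ^ (y + 62 * j)) =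
    (∏ p ∈ Finset.Ico t (2 * t) ×ˢ Finset.range 5, (1 - X ^ (2 ^ (p.2 + 1) + 62 * p.1)) :
      ℤ⟦X⟧) := by
  let big : ℕ → ℤ⟦X⟧ := fun s => ∏ c ∈ Finset.range 5, (1 - X ^ (2 ^ (c + 1) + 62 * s))
  let small : ℕ → ℤ⟦X⟧ := fun s => ∏ c ∈ Finset.range 5, (1 - X ^ (2 ^ c + 31 * s))
  have hbig : ∀ s, (∏ c ∈ Finset.range 5, (1 + X ^ (2 ^ c + 31 * s))) * small s = big s := by
    intro s
    simp only [small, big, ← Finset.prod_mul_distrib]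
    refine Finset.prod_congr rfl fun c _ => ?_
    rw [show 2 ^ (c + 1) + 62 * s = (2 ^ c + 31 * s) + (2 ^ c + 31 * s) by ring,
      pow_add X (2 ^ c + 31 * s)]
    ring
  have hpair : ∀ j, small (2 * j) * small (2 * j + 1) =
      (∏ y ∈ andrewsResidues, (1 - X ^ (y + 62 * j))) * big j := by
    intro j
    simp only [small, big, andrewsResidues, Finset.prod_range_succ, Finset.prod_range_zero]
    rw [Finset.prod_insert (by decide), Finset.prod_insert (by decide),
      Finset.prod_insert (by decide), Finset.prod_insert (by decide), Finset.prod_singleton]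
    ring
  have hsmall : ∏ s ∈ Finset.range (2 * t), small s =
      (∏ j ∈ Finset.range t, ∏ y ∈ andrewsResidues, (1 - X ^ (y + 62 * j))) *
        ∏ j ∈ Finset.range t, big j := by
    rw [← Finset.prod_mul_distrib]
    clear hbig
    induction t with
    | zero => simp
    | succ t ih =>
      rw [mul_add_one, Finset.prod_range_succ, Finset.prod_range_succ, mul_assoc, hpair, ih,
        Finset.prod_range_succ]
  have hne : ∏ j ∈ Finset.range t, big j ≠ 0 := by
    intro h
    have := congrArg (constantCoeff (R := ℤ)) h
    simp [big, map_prod] at this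
  apply mul_right_cancel₀ hne
  rw [mul_assoc, ← hsmall, ← Finset.prod_mul_distrib, Finset.prod_congr rfl fun s _ => hbig s,
    Finset.prod_product, ← Finset.prod_range_mul_prod_Ico _ (show t ≤ 2 * t by omega), mul_comm]

theorem card_partitions_le_coeff_prod (s : Finset ℕ) (n : ℕ) :
    (Nat.card {p : n.Partition // ∀ x ∈ p.parts, x ∈ s} : ℤ) ≤
      coeff n (∏ i ∈ s, geomSeries i) := by
  classical
  rw [coeff_prod]
  simp only [geomSeries, coeff_mk, Finset.prod_boole, Finset.sum_boole, Nat.cast_le]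
  rw [Nat.card_eq_fintype_card, Fintype.card_subtype]
  refine Finset.card_le_card_of_injOn Nat.Partition.toFinsuppAntidiag ?_
    (Nat.Partition.toFinsuppAntidiag_injective n).injOn
  intro p hp
  simp only [Finset.coe_filter, Finset.mem_univ, true_and, Set.mem_ofPred_eq] at hp ⊢
  refine ⟨?_, fun i _ => ?_⟩
  · have h := Finset.mem_finsuppAntidiag.1 p.toFinsuppAntidiag_mem_finsuppAntidiag
    have hsub : p.toFinsuppAntidiag.support ⊆ s := fun i hi => hp i (by
      simpa [Nat.Partition.toFinsuppAntidiag] using hi)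
    refine Finset.mem_finsuppAntidiag.2 ⟨?_, hsub⟩
    refine Eq.trans ?_ h.1
    rw [← Finset.sum_subset h.2 fun i _ hi => by simpa using hi,
      ← Finset.sum_subset hsub fun i _ hi => by simpa using hi]
  · exact Dvd.intro_left _ rfl

/-- The partition inequality of Andrews, for gap `31`. -/
theorem card_andrews_le_sum_gapSeqCount (n : ℕ) :
    Nat.card {p : n.Partition // ∀ x ∈ p.parts, x % 62 ∈ andrewsResidues} ≤
      ∑ t ∈ Finset.range (n + 1), gapSeqCount 31 t 1 n := by
  classical
  let s : Finset ℕ := (Finset.range (n + 1) ×ˢ andrewsResidues).image fun p => p.2 + 62 * p.1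
  have hlt : ∀ y ∈ andrewsResidues, 0 < y ∧ y < 62 := by decide
  have hs : ∏ x ∈ s, geomSeries x =
      ∏ j ∈ Finset.range (n + 1), ∏ y ∈ andrewsResidues, geomSeries (y + 62 * j) := by
    rw [Finset.prod_image, Finset.prod_product]
    rintro ⟨j, y⟩ h ⟨j', y'⟩ h' e
    simp only [Finset.coe_product, Set.mem_prod, Finset.mem_coe] at h h' e
    have := hlt y h.2
    have := hlt y' h'.2
    rw [Prod.mk.injEq]
    omega
  have hinv : (∏ j ∈ Finset.range (n + 1), ∏ y ∈ andrewsResidues, (1 - X ^ (y + 62 * j))) *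
      ∏ x ∈ s, geomSeries x = 1 := by
    rw [hs, ← Finset.prod_mul_distrib]
    refine Finset.prod_eq_one fun j _ => ?_
    rw [← Finset.prod_mul_distrib]
    exact Finset.prod_eq_one fun y hy =>
      one_sub_X_pow_mul_geomSeries (by have := hlt y hy; omega)
  have hcoeff : coeff n (∏ x ∈ s, geomSeries x) =
      ∑ t ∈ Finset.range (n + 1), coeff n (andrewsSeries t 0) := by
    rw [← coeff_prod_one_add (t := 2 * (n + 1)) (by omega)]
    symm
    apply coeff_eq_of_X_pow_dvd_sub
    have h := prod_one_add_mul_prod_one_sub (n + 1)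
    have hd := X_pow_dvd_prod_sub_one (m := n + 1)
      (s := Finset.Ico (n + 1) (2 * (n + 1)) ×ˢ Finset.range 5)
      (e := fun p => 2 ^ (p.2 + 1) + 62 * p.1) (fun p hp => by
        have := (Finset.mem_Ico.1 (Finset.mem_product.1 hp).1).1
        linarith [Nat.zero_le (2 ^ (p.2 + 1))])
    rw [← h] at hd
    convert hd.mul_right (∏ x ∈ s, geomSeries x) using 1
    rw [sub_mul, mul_assoc, hinv, mul_one, one_mul]
  have hcard : (Nat.card {p : n.Partition // ∀ x ∈ p.parts, x % 62 ∈ andrewsResidues} : ℤ) ≤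
      coeff n (∏ x ∈ s, geomSeries x) := by
    refine le_trans ?_ (card_partitions_le_coeff_prod s n)
    refine Nat.cast_le.2 (Nat.card_le_card_of_injective
      (Subtype.map id fun p hp x hx => ?_) (Subtype.map_injective _ Function.injective_id))
    have := p.le_of_mem_parts hx
    refine Finset.mem_image.2 ⟨(x / 62, x % 62), ?_, Nat.mod_add_div _ _⟩
    exact Finset.mem_product.2 ⟨Finset.mem_range.2 (by dsimp only; omega), hp x hx⟩
  rw [← Nat.cast_le (α := ℤ), Nat.cast_sum]
  refine hcard.trans (hcoeff.trans_le (Finset.sum_le_sum fun t _ => ?_))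
  have := andrewsSeries_le t (Nat.zero_le 5) n
  rwa [pow_zero, coeff_gapSeries] at this

section Compression

/-- Sends `k * d - 1` and `k * d + 1`, for `k ≥ 2`, injectively to numbers whose residue modulo
`62` lies in `andrewsResidues`, decreasing them by slightly more than the factor `31 / d`. -/
def compressPart (d x : ℕ) : ℕ :=
  let k := (x + 1) / d
  if k % 2 = 0 then (if x % d = 1 then 31 * k - 23 else 31 * k - 27)
  else (if x % d = 1 then 31 * k - 30 else 31 * k - 46)

/-- The inverse of `compressPart`. -/
def expandPart (d z : ℕ) : ℕ :=
  if z % 62 = 35 then (z + 27) / 31 * d - 1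
  else if z % 62 = 39 then (z + 23) / 31 * d + 1
  else if z % 62 = 47 then (z + 46) / 31 * d - 1
  else (z + 30) / 31 * d + 1

/-- The numbers congruent to `1` or `-1` modulo `d` that are at least `2 * d - 1`. -/
def IsLargePart (d x : ℕ) : Prop := ∃ k, 2 ≤ k ∧ (x + 1 = k * d ∨ x = k * d + 1)

variable {d : ℕ}

theorem compressPart_sub_one (hd : 3 ≤ d) {k x : ℕ} (hk : 2 ≤ k) (hx : x + 1 = k * d) :
    compressPart d x = if k % 2 = 0 then 31 * k - 27 else 31 * k - 46 := by
  have hmod : x % d ≠ 1 := by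
    have hx' : x = (d - 1) + d * (k - 1) := by
      obtain ⟨k, rfl⟩ : ∃ l, k = l + 1 := ⟨k - 1, by omega⟩
      rw [add_tsub_cancel_right, mul_comm d]
      rw [add_one_mul] at hx
      omega
    rw [hx', Nat.add_mul_mod_self_left, Nat.mod_eq_of_lt (by omega)]
    omega
  have hdiv : (x + 1) / d = k := by rw [hx, Nat.mul_div_cancel _ (by omega)]
  simp only [compressPart, hdiv, if_neg hmod]

theorem compressPart_add_one (hd : 3 ≤ d) (k : ℕ) :
    compressPart d (k * d + 1) = if k % 2 = 0 then 31 * k - 23 else 31 * k - 30 := by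
  have hmod : (k * d + 1) % d = 1 := by
    rw [add_comm, Nat.add_mul_mod_self_right, Nat.mod_eq_of_lt (by omega)]
  have hdiv : (k * d + 1 + 1) / d = k := by
    rw [add_assoc, add_comm, Nat.add_mul_div_right _ _ (by omega), Nat.div_eq_of_lt (by omega),
      zero_add]
  simp only [compressPart, hdiv, if_pos hmod]

theorem expandPart_compressPart (hd : 3 ≤ d) {x : ℕ} (hx : IsLargePart d x) :
    expandPart d (compressPart d x) = x := by
  obtain ⟨k, hk, hx | rfl⟩ := hx
  · rw [compressPart_sub_one hd hk hx, expandPart]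
    split_ifs <;> try omega
    · rw [show (31 * k - 27 + 27) / 31 = k by omega]; omega
    · rw [show (31 * k - 46 + 46) / 31 = k by omega]; omega
  · rw [compressPart_add_one hd, expandPart]
    split_ifs <;> try omega
    · rw [show (31 * k - 23 + 23) / 31 = k by omega]
    · rw [show (31 * k - 30 + 30) / 31 = k by omega]

theorem compressPart_mod_mem (hd : 3 ≤ d) {x : ℕ} (hx : IsLargePart d x) :
    compressPart d x % 62 ∈ andrewsResidues ∧ compressPart d x ≠ 1 ∧ compressPart d x ≠ 33 ∧
      compressPart d x ≠ 95 := by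
  simp only [andrewsResidues, Finset.mem_insert, Finset.mem_singleton]
  obtain ⟨k, hk, hx | rfl⟩ := hx
  · rw [compressPart_sub_one hd hk hx]
    split_ifs <;> omega
  · rw [compressPart_add_one hd]
    split_ifs <;> omega

theorem mul_compressPart_le (hd : 31 ≤ d) {x : ℕ} (hx : IsLargePart d x) :
    d * compressPart d x + 22 * d ≤ 31 * x := by
  obtain ⟨k, hk, hx | rfl⟩ := hx
  · rw [compressPart_sub_one (by omega) hk hx]
    have h : d * ((if k % 2 = 0 then 31 * k - 27 else 31 * k - 46) + 27) ≤ d * (31 * k) :=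
      Nat.mul_le_mul_left d (by split_ifs <;> omega)
    nlinarith
  · rw [compressPart_add_one (by omega)]
    have h : d * ((if k % 2 = 0 then 31 * k - 23 else 31 * k - 30) + 23) ≤ d * (31 * k) :=
      Nat.mul_le_mul_left d (by split_ifs <;> omega)
    nlinarith

theorem mul_sum_map_compressPart_le (hd : 31 ≤ d) {s : Multiset ℕ}
    (hs : ∀ x ∈ s, IsLargePart d x) :
    d * (s.map (compressPart d)).sum + 22 * d * s.card ≤ 31 * s.sum := by
  induction s using Multiset.induction_on with
  | empty => simp
  | cons a s ih =>
    have h1 := mul_compressPart_le hd (hs a (Multiset.mem_cons_self a s))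
    have h2 := ih fun x hx => hs x (Multiset.mem_cons_of_mem hx)
    simp only [Multiset.map_cons, Multiset.sum_cons, Multiset.card_cons]
    linarith

/-- The parts of `s` other than `1` and `d + 1`. -/
def largeParts (d : ℕ) (s : Multiset ℕ) : Multiset ℕ := s.filter fun x => x ≠ 1 ∧ x ≠ d + 1

theorem eq_add_largeParts (hd : d ≠ 0) (s : Multiset ℕ) :
    s = Multiset.replicate (s.count 1) 1 + Multiset.replicate (s.count (d + 1)) (d + 1) +
      largeParts d s := by
  ext x
  rw [Multiset.count_add, Multiset.count_add, Multiset.count_replicate, Multiset.count_replicate,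
    largeParts, Multiset.count_filter]
  split_ifs <;> grind

/-- The parts other than `1` of the image of the partition `s` of `n` under the compression. -/
def compressCore (d n : ℕ) (s : Multiset ℕ) : Multiset ℕ :=
  if largeParts d s = 0 ∧ s.count (d + 1) = 2 ∧ 31 * n < 66 * d then {47}
  else if largeParts d s = 0 ∧ s.count (d + 1) = 3 ∧ 31 * n < 99 * d then {35, 39}
  else Multiset.replicate (s.count (d + 1) % 4) 33 + Multiset.replicate (s.count (d + 1) / 4) 95 +
    (largeParts d s).map (compressPart d)

/-- Recovers the multiplicity of `d + 1` and the parts other than `1` and `d + 1` from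
`compressCore`. -/
def expandCore (d n : ℕ) (c : Multiset ℕ) : ℕ × Multiset ℕ :=
  if c = {47} ∧ 31 * n < 66 * d then (2, 0)
  else if c = {35, 39} ∧ 31 * n < 99 * d then (3, 0)
  else (c.count 33 + 4 * c.count 95, (c.filter fun z => z ≠ 33 ∧ z ≠ 95).map (expandPart d))

variable {n : ℕ} {s : Multiset ℕ}

theorem mem_compressCore (hd : 3 ≤ d) (hs : ∀ x ∈ largeParts d s, IsLargePart d x) {z : ℕ}
    (hz : z ∈ compressCore d n s) : z % 62 ∈ andrewsResidues ∧ z ≠ 1 := by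
  unfold compressCore at hz
  split_ifs at hz
  · rw [Multiset.mem_singleton] at hz
    subst hz
    decide
  · simp only [Multiset.insert_eq_cons, Multiset.mem_cons, Multiset.mem_singleton] at hz
    rcases hz with rfl | rfl <;> decide
  · simp only [Multiset.mem_add, Multiset.mem_map] at hz
    rcases hz with (hz | hz) | ⟨x, hx, rfl⟩
    · rw [Multiset.eq_of_mem_replicate hz]
      decide
    · rw [Multiset.eq_of_mem_replicate hz]
      decide
    · exact ⟨(compressPart_mod_mem hd (hs x hx)).1, (compressPart_mod_mem hd (hs x hx)).2.1⟩

theorem sum_eq_add_largeParts (hd : d ≠ 0) (s : Multiset ℕ) :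
    s.sum = s.count 1 + s.count (d + 1) * (d + 1) + (largeParts d s).sum := by
  conv_lhs => rw [eq_add_largeParts hd s]
  simp

theorem mul_sum_compressCore_le (hd : 31 ≤ d) (hn : 33 * d ≤ 31 * n) (hsum : s.sum = n)
    (hs : ∀ x ∈ largeParts d s, IsLargePart d x) : d * (compressCore d n s).sum ≤ 31 * n := by
  have h := sum_eq_add_largeParts (d := d) (by omega) s
  have hlarge := mul_sum_map_compressPart_le hd hs
  rw [hsum] at h
  unfold compressCore
  split_ifs with h1 h2
  · rw [h1.2.1] at h
    simp only [Multiset.sum_singleton]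
    omega
  · rw [h2.2.1] at h
    simp only [Multiset.insert_eq_cons, Multiset.sum_cons, Multiset.sum_singleton]
    omega
  · simp only [Multiset.sum_add, Multiset.sum_replicate, smul_eq_mul]
    generalize s.count (d + 1) = i at *
    obtain ⟨u, v, hu, rfl⟩ : ∃ u v, u < 4 ∧ i = 4 * v + u := ⟨i % 4, i / 4, by omega, by omega⟩
    rw [show (4 * v + u) % 4 = u by omega, show (4 * v + u) / 4 = v by omega]
    rcases Nat.eq_zero_or_pos v with rfl | hv
    · rcases Multiset.empty_or_exists_mem (largeParts d s) with h0 | ⟨x, hx⟩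
      · simp only [h0, true_and, Multiset.map_zero, Multiset.sum_zero] at h1 h2 ⊢
        interval_cases u <;> omega
      · have hcard := Multiset.card_pos_iff_exists_mem.2 ⟨x, hx⟩
        have : 22 * d ≤ 22 * d * (largeParts d s).card := Nat.le_mul_of_pos_right _ hcard
        interval_cases u <;> linarith
    · have : d * (u * 33 + v * 95) ≤ d * (31 * (4 * v + u)) := Nat.mul_le_mul_left d (by omega)
      nlinarith

theorem expandCore_compressCore (hd : 31 ≤ d) (hsum : s.sum = n)
    (hs : ∀ x ∈ largeParts d s, IsLargePart d x) :
    expandCore d n (compressCore d n s) = (s.count (d + 1), largeParts d s) := by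
  have hne : ({35, 39} : Multiset ℕ) ≠ {47} := by decide
  have h := sum_eq_add_largeParts (d := d) (by omega) s
  rw [hsum] at h
  unfold compressCore
  split_ifs with h1 h2
  · rw [expandCore, if_pos ⟨rfl, h1.2.2⟩, h1.1, h1.2.1]
  · rw [expandCore, if_neg fun h => hne h.1, if_pos ⟨rfl, h2.2.2⟩, h2.1, h2.2.1]
  · generalize hc : Multiset.replicate (s.count (d + 1) % 4) 33 +
      Multiset.replicate (s.count (d + 1) / 4) 95 + (largeParts d s).map (compressPart d) = c
    have hmap : ∀ z ∈ (largeParts d s).map (compressPart d), z ≠ 33 ∧ z ≠ 95 := by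
      intro z hz
      obtain ⟨x, hx, rfl⟩ := Multiset.mem_map.1 hz
      exact (compressPart_mod_mem (by omega) (hs x hx)).2.2
    have h33 : c.count 33 = s.count (d + 1) % 4 := by
      rw [← hc, Multiset.count_add, Multiset.count_add, Multiset.count_replicate_self,
        Multiset.count_replicate, Multiset.count_eq_zero_of_notMem fun h => (hmap _ h).1 rfl]
      simp
    have h95 : c.count 95 = s.count (d + 1) / 4 := by
      rw [← hc, Multiset.count_add, Multiset.count_add, Multiset.count_replicate_self,
        Multiset.count_replicate, Multiset.count_eq_zero_of_notMem fun h => (hmap _ h).2 rfl]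
      simp
    have hrest : (c.filter fun z => z ≠ 33 ∧ z ≠ 95).map (expandPart d) = largeParts d s := by
      rw [← hc, Multiset.filter_add, Multiset.filter_add, Multiset.filter_eq_self.2 hmap,
        Multiset.filter_eq_nil.2 fun z hz => by simp [Multiset.eq_of_mem_replicate hz],
        Multiset.filter_eq_nil.2 fun z hz => by simp [Multiset.eq_of_mem_replicate hz],
        zero_add, zero_add, Multiset.map_map]
      conv_rhs => rw [← Multiset.map_id (largeParts d s)]
      exact Multiset.map_congr rfl fun x hx => expandPart_compressPart (by omega) (hs x hx)
    rw [expandCore, if_neg, if_neg, hrest, h33, h95, Nat.mod_add_div]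
    · rintro ⟨rfl, hlt⟩
      have : largeParts d s = {2 * d - 1, 2 * d + 1} := by
        rw [← hrest]; simp [expandPart, Multiset.filter_singleton]
      rw [this] at h
      simp only [Multiset.insert_eq_cons, Multiset.sum_cons, Multiset.sum_singleton] at h
      omega
    · rintro ⟨rfl, hlt⟩
      have : largeParts d s = {3 * d - 1} := by
        rw [← hrest]; simp [expandPart, Multiset.filter_singleton]
      rw [this, Multiset.sum_singleton] at h
      omega

end Compression

theorem isLargePart_of_modEq {d x : ℕ} (hx0 : 0 < x)
    (hx : x ≡ 1 [MOD d] ∨ x + 1 ≡ 0 [MOD d]) (hx1 : x ≠ 1) (hxd : x ≠ d + 1)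
    (hxd' : x ≠ d - 1) : IsLargePart d x := by
  rcases hx with hx | hx
  · obtain ⟨k, hk⟩ := (Nat.modEq_iff_dvd' hx0).1 hx.symm
    have hk0 : k ≠ 0 := by rintro rfl; omega
    have hk1 : k ≠ 1 := by rintro rfl; omega
    exact ⟨k, by omega, Or.inr (by rw [mul_comm]; omega)⟩
  · obtain ⟨k, hk⟩ := Nat.modEq_zero_iff_dvd.1 hx
    have hk0 : k ≠ 0 := by rintro rfl; omega
    have hk1 : k ≠ 1 := by rintro rfl; omega
    exact ⟨k, by omega, Or.inl (by rw [hk, mul_comm])⟩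

theorem eq_of_largeParts_eq {d : ℕ} (hd : d ≠ 0) {s s' : Multiset ℕ} (hsum : s.sum = s'.sum)
    (hcount : s.count (d + 1) = s'.count (d + 1)) (hlarge : largeParts d s = largeParts d s') :
    s = s' := by
  have h := sum_eq_add_largeParts hd s
  have h' := sum_eq_add_largeParts hd s'
  rw [hsum, h', hcount, hlarge] at h
  rw [eq_add_largeParts hd s, eq_add_largeParts hd s', hcount, hlarge,
    show s.count 1 = s'.count 1 by omega]

theorem isLargePart_of_mem_largeParts {d n : ℕ} (hd : 31 ≤ d) (p : n.Partition)
    (hp : (∀ x ∈ p.parts, x ≡ 1 [MOD d - 3 + 3] ∨ x + 1 ≡ 0 [MOD d - 3 + 3]) ∧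
      ∀ x ∈ p.parts, x ≠ d - 3 + 3 - 1) : ∀ x ∈ largeParts d p.parts, IsLargePart d x := by
  rw [Nat.sub_add_cancel (by omega)] at hp
  intro x hx
  obtain ⟨hx, hx1, hxd⟩ := Multiset.mem_filter.1 hx
  exact isLargePart_of_modEq (p.parts_pos hx) (hp.1 x hx) hx1 hxd (hp.2 x hx)

theorem congMinusCount_le_card_andrews {d n : ℕ} (hd : 31 ≤ d) (hn : 33 * d ≤ 31 * n) :
    congMinusCount (d - 3) 1 n ≤
      Nat.card {p : (31 * n / d).Partition // ∀ x ∈ p.parts, x % 62 ∈ andrewsResidues} := by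
  have hsum : ∀ p : n.Partition, (∀ x ∈ largeParts d p.parts, IsLargePart d x) →
      (compressCore d n p.parts).sum ≤ 31 * n / d := fun p hp => by
    rw [Nat.le_div_iff_mul_le (by omega), mul_comm]
    exact mul_sum_compressCore_le hd hn p.parts_sum hp
  let image : n.Partition → Multiset ℕ := fun p => compressCore d n p.parts +
    Multiset.replicate (31 * n / d - (compressCore d n p.parts).sum) 1
  have himage : ∀ p : n.Partition, (∀ x ∈ largeParts d p.parts, IsLargePart d x) →
      ∀ x ∈ image p, x % 62 ∈ andrewsResidues := fun p hp x hx => by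
    rcases Multiset.mem_add.1 hx with hx | hx
    · exact (mem_compressCore (by omega) hp hx).1
    · rw [Multiset.eq_of_mem_replicate hx]
      decide
  have hcore : ∀ p : n.Partition, (∀ x ∈ largeParts d p.parts, IsLargePart d x) →
      (image p).filter (· ≠ 1) = compressCore d n p.parts := fun p hp => by
    rw [Multiset.filter_add, Multiset.filter_eq_self.2 fun x hx =>
      (mem_compressCore (by omega) hp hx).2, Multiset.filter_eq_nil.2 fun x hx => by
      simp [Multiset.eq_of_mem_replicate hx], add_zero]
  have hlarge := isLargePart_of_mem_largeParts (n := n) hd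
  refine Nat.card_le_card_of_injective (fun p => ⟨⟨image p.1, fun {x} hx => ?_, ?_⟩,
    himage p.1 (hlarge p.1 p.2)⟩) fun p p' h => ?_
  · refine Nat.pos_of_ne_zero ?_
    rintro rfl
    exact absurd (himage p.1 (hlarge p.1 p.2) 0 hx) (by decide)
  · simp only [image, Multiset.sum_add, Multiset.sum_replicate, smul_eq_mul, mul_one]
    exact Nat.add_sub_cancel' (hsum p.1 (hlarge p.1 p.2))
  · have himg : image p.1 = image p'.1 := congrArg (fun q => q.1.parts) h
    have hc := hcore p.1 (hlarge p.1 p.2)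
    rw [himg, hcore p'.1 (hlarge p'.1 p'.2)] at hc
    have he := expandCore_compressCore hd p.1.parts_sum (hlarge p.1 p.2)
    rw [← hc, expandCore_compressCore hd p'.1.parts_sum (hlarge p'.1 p'.2), Prod.mk.injEq] at he
    exact Subtype.ext (Nat.Partition.ext (eq_of_largeParts_eq (by omega)
      (p.1.parts_sum.trans p'.1.parts_sum.symm) he.1.symm he.2.symm))

theorem congMinusCount_le_two {d n : ℕ} (hd : 31 ≤ d) (hn : 31 * n < 33 * d) :
    congMinusCount (d - 3) 1 n ≤ 2 := by
  have hlarge : ∀ p : n.Partition, ((∀ x ∈ p.parts, x ≡ 1 [MOD d - 3 + 3] ∨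
      x + 1 ≡ 0 [MOD d - 3 + 3]) ∧ ∀ x ∈ p.parts, x ≠ d - 3 + 3 - 1) →
      largeParts d p.parts = 0 := by
    intro p hp
    refine Multiset.eq_zero_of_forall_notMem fun x hx => ?_
    obtain ⟨k, hk, h⟩ := isLargePart_of_mem_largeParts hd p hp x hx
    have := p.le_of_mem_parts (Multiset.mem_filter.1 hx).1
    have : 2 * d ≤ k * d := Nat.mul_le_mul_right d hk
    omega
  have hcount : ∀ p : n.Partition, p.parts.count (d + 1) < 2 := by
    intro p
    have h := sum_eq_add_largeParts (d := d) (by omega) p.parts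
    rw [p.parts_sum] at h
    by_contra! h2
    have := Nat.mul_le_mul_right (d + 1) h2
    omega
  rw [← Nat.card_fin 2]
  refine Nat.card_le_card_of_injective (fun p => ⟨p.1.parts.count (d + 1), hcount p.1⟩)
    fun p p' h => ?_
  exact Subtype.ext (Nat.Partition.ext (eq_of_largeParts_eq (by omega)
    (p.1.parts_sum.trans p'.1.parts_sum.symm) (Fin.mk.inj h)
    ((hlarge p.1 p.2).trans (hlarge p'.1 p'.2).symm)))

theorem two_le_gapCount {d n : ℕ} (hn : d + 2 ≤ n) : 2 ≤ gapCount d 1 n := by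
  refine le_trans ?_ (sum_gapSeqCount_le_gapCount d n 3)
  have h1 : gapSeqCount d 1 1 n = 1 := by rw [gapSeqCount_one, if_pos (by omega)]
  have h2 : 1 ≤ gapSeqCount d 2 1 n := by
    rw [gapSeqCount]
    refine le_trans ?_ (Finset.single_le_sum (fun _ _ => Nat.zero_le _)
      (Finset.mem_Icc.2 ⟨le_refl 1, by omega⟩))
    rw [gapSeqCount_one, if_pos (by omega)]
  rw [Finset.sum_range_succ, Finset.sum_range_succ]
  omega

theorem sum_gapSeqCount_scale {d n : ℕ} (hd : 31 ≤ d) (hn : d ≤ 31 * n) (N : ℕ) :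
    ∑ t ∈ Finset.range (N + 1), gapSeqCount 31 t 1 (31 * n / d) ≤
      ∑ t ∈ Finset.range (N + 1), gapSeqCount d t 1 n := by
  refine Finset.sum_le_sum fun t _ => ?_
  cases t with
  | zero =>
    rw [gapSeqCount, if_neg (Nat.div_pos hn (by omega)).ne']
    exact Nat.zero_le _
  | succ t => exact gapSeqCount_scale (by omega) hd t (by omega) (Nat.mul_div_le _ _)

theorem stmt6 (d n : ℕ) (hd : d = 31 ∨ 63 ≤ d) (hn : d + 2 ≤ n) :
    congMinusCount (d - 3) 1 n ≤ gapCount d 1 n := by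
  have hd' : 31 ≤ d := by omega
  rcases lt_or_ge (31 * n) (33 * d) with h | h
  · exact (congMinusCount_le_two hd' h).trans (two_le_gapCount hn)
  · calc congMinusCount (d - 3) 1 n
        ≤ Nat.card {p : (31 * n / d).Partition // ∀ x ∈ p.parts, x % 62 ∈ andrewsResidues} :=
          congMinusCount_le_card_andrews hd' h
      _ ≤ _ := card_andrews_le_sum_gapSeqCount _
      _ ≤ _ := sum_gapSeqCount_scale hd' (by omega) _
      _ ≤ gapCount d 1 n := sum_gapSeqCount_le_gapCount d n _
end

section
/- Let a be a positive integer and let S = {x_i}_{i≥1} and T = {y_i}_{i≥1} be two strictly increasing sequences of positive integers such that y₁ = a, a divides y_i for every i, and x_i ≥ y_i for every i. Then for all n ≥ 1, ρ(T; n + h_n^{(a)}) ≥ ρ(S; n). -/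
theorem dvd_add_negRes (n : ℕ) {a : ℕ} (ha : 1 ≤ a) : a ∣ n + negRes n a := by
  have hlt : n % a < a := Nat.mod_lt n ha
  have h : n + negRes n a ≡ n % a + (a - n % a) [MOD a] :=
    (Nat.mod_modEq n a).symm.add (Nat.mod_modEq _ a)
  rw [Nat.add_sub_cancel' hlt.le] at h
  exact (h.dvd_iff dvd_rfl).2 dvd_rfl

/-- A multiset of indices is determined by its weighted sum together with its image under an
injective map, even when the latter is padded by copies of the image of a fixed index. -/
theorem Multiset.eq_of_map_add_replicate_eq {ι α : Type*} {x : ι → ℕ} {y : ι → α} {i : ι}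
    (hy : Function.Injective y) (hx : 0 < x i) {u v : Multiset ι} {k l : ℕ}
    (hsum : (u.map x).sum = (v.map x).sum)
    (h : u.map y + replicate k (y i) = v.map y + replicate l (y i)) : u = v := by
  have huv : u + replicate k i = v + replicate l i :=
    Multiset.map_injective hy (by simpa only [Multiset.map_add, Multiset.map_replicate] using h)
  have hkl : k * x i = l * x i := by
    have := congrArg (fun w => (w.map x).sum) huv
    simpa [hsum] using this
  rw [Nat.eq_of_mul_eq_mul_right hx hkl] at huv
  exact add_right_cancel huv

theorem stmt7 (a : ℕ) (ha : 1 ≤ a) (x y : ℕ → ℕ)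
    (hx : StrictMono x) (hy : StrictMono y)
    (hxpos : ∀ i, 0 < x i) (hypos : ∀ i, 0 < y i)
    (hy0 : y 0 = a) (hdvd : ∀ i, a ∣ y i) (hxy : ∀ i, y i ≤ x i)
    (n : ℕ) (hn : 1 ≤ n) :
    rhoCount (Set.range x) n ≤ rhoCount (Set.range y) (n + negRes n a) := by
  have hidx (p : {p : n.Partition // ∀ z ∈ p.parts, z ∈ Set.range x}) :
      ∃ u : Multiset ℕ, u.map x = p.1.parts := by
    choose! g hg using p.2
    refine ⟨p.1.parts.map g, ?_⟩
    rw [Multiset.map_map]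
    exact (Multiset.map_congr rfl hg).trans (Multiset.map_id' _)
  choose u hu using hidx
  have husum (p) : ((u p).map x).sum = n := by rw [hu, p.1.parts_sum]
  have hpad (p) : ∃ k, ((u p).map y + Multiset.replicate k (y 0)).sum = n + negRes n a := by
    have hle : ((u p).map y).sum ≤ n + negRes n a :=
      (Multiset.sum_map_le_sum_map y x fun i _ => hxy i).trans (by rw [husum]; omega)
    have hd : a ∣ ((u p).map y).sum := Multiset.dvd_sum fun z hz => by
      obtain ⟨i, -, rfl⟩ := Multiset.mem_map.1 hz
      exact hdvd i
    obtain ⟨k, hk⟩ := Nat.dvd_sub (dvd_add_negRes n ha) hd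
    refine ⟨k, ?_⟩
    rw [Multiset.sum_add, Multiset.sum_replicate, smul_eq_mul, hy0, mul_comm, ← hk]
    omega
  choose k hk using hpad
  have hmem (p) : ∀ z ∈ (u p).map y + Multiset.replicate (k p) (y 0), z ∈ Set.range y := by
    intro z hz
    rcases Multiset.mem_add.1 hz with hz | hz
    · obtain ⟨i, -, rfl⟩ := Multiset.mem_map.1 hz
      exact ⟨i, rfl⟩
    · exact ⟨0, (Multiset.eq_of_mem_replicate hz).symm⟩
  refine Nat.card_le_card_of_injective
    (fun p => ⟨⟨(u p).map y + Multiset.replicate (k p) (y 0), fun {z} hz => ?_, hk p⟩, hmem p⟩) ?_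
  · obtain ⟨i, rfl⟩ := hmem p z hz
    exact hypos i
  · intro p q hpq
    have hparts := congrArg (fun r => r.1.parts) hpq
    have huv : u p = u q := Multiset.eq_of_map_add_replicate_eq hy.injective (hxpos 0)
      ((husum p).trans (husum q).symm) hparts
    exact Subtype.ext (Nat.Partition.ext (by rw [← hu p, ← hu q, huv]))
end

section
/- For all integers n ≥ 1, one has q_1^{(3)}(n) ≥ Q_1^{(3,-)}(n); that is, the number of partitions of n into distinct parts each at least 3 is at least the number of partitions of n into parts congruent to ±3 modulo 4 none of which equals 1. -/
namespace Nat.Partition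

/-- Adjoin a part equal to `1`. -/
def consOne {m : ℕ} (p : m.Partition) : (m + 1).Partition where
  parts := 1 ::ₘ p.parts
  parts_pos {i} hi := by
    rcases Multiset.mem_cons.1 hi with rfl | hi
    · exact Nat.one_pos
    · exact p.parts_pos hi
  parts_sum := by rw [Multiset.sum_cons, p.parts_sum, Nat.add_comm]

theorem consOne_injective {m : ℕ} : Function.Injective (consOne (m := m)) := by
  intro p q h
  exact Nat.Partition.ext ((Multiset.cons_inj_right 1).1 (congrArg parts h))

/-- Lower by `1` the smallest part of a partition having a part `1` or `2`. -/
def lowerSmallPart {m : ℕ} (p : (m + 1).Partition) (hp : 1 ∈ p.parts ∨ 2 ∈ p.parts) :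
    m.Partition where
  parts := if 1 ∈ p.parts then p.parts.erase 1 else 1 ::ₘ p.parts.erase 2
  parts_pos {i} hi := by
    split_ifs at hi
    · exact p.parts_pos (Multiset.mem_of_mem_erase hi)
    · rcases Multiset.mem_cons.1 hi with rfl | hi
      · exact Nat.one_pos
      · exact p.parts_pos (Multiset.mem_of_mem_erase hi)
  parts_sum := by
    have hsum := p.parts_sum
    split_ifs with h
    · have := Multiset.sum_erase h
      omega
    · have := Multiset.sum_erase (hp.resolve_left h)
      rw [Multiset.sum_cons]
      omega

theorem lowerSmallPart_nodup {m : ℕ} {p : (m + 1).Partition} (hp : 1 ∈ p.parts ∨ 2 ∈ p.parts)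
    (hd : p.parts.Nodup) : (p.lowerSmallPart hp).parts.Nodup := by
  unfold lowerSmallPart
  dsimp only
  split_ifs with h
  · exact hd.erase 1
  · exact Multiset.nodup_cons.2 ⟨fun h' => h (Multiset.mem_of_mem_erase h'), hd.erase 2⟩

theorem one_mem_lowerSmallPart_iff {m : ℕ} {p : (m + 1).Partition}
    (hp : 1 ∈ p.parts ∨ 2 ∈ p.parts) (hd : p.parts.Nodup) :
    1 ∈ (p.lowerSmallPart hp).parts ↔ 1 ∉ p.parts := by
  unfold lowerSmallPart
  dsimp only
  split_ifs with h
  · simpa [h] using hd.notMem_erase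
  · simp [h]

theorem lowerSmallPart_inj {m : ℕ} {p q : (m + 1).Partition}
    (hp : 1 ∈ p.parts ∨ 2 ∈ p.parts) (hq : 1 ∈ q.parts ∨ 2 ∈ q.parts)
    (hpd : p.parts.Nodup) (hqd : q.parts.Nodup)
    (h : p.lowerSmallPart hp = q.lowerSmallPart hq) : p = q := by
  have hone : 1 ∈ p.parts ↔ 1 ∈ q.parts := by
    rw [← not_iff_not, ← one_mem_lowerSmallPart_iff hp hpd, ← one_mem_lowerSmallPart_iff hq hqd, h]
  have hparts := congrArg parts h
  unfold lowerSmallPart at hparts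
  dsimp only at hparts
  apply Nat.Partition.ext
  by_cases h1 : 1 ∈ p.parts
  · have h2 := hone.1 h1
    rw [if_pos h1, if_pos h2] at hparts
    rw [← Multiset.cons_erase h1, hparts, Multiset.cons_erase h2]
  · have h2 := mt hone.2 h1
    rw [if_neg h1, if_neg h2, Multiset.cons_inj_right] at hparts
    rw [← Multiset.cons_erase (hp.resolve_left h1), hparts,
      Multiset.cons_erase (hq.resolve_left h2)]

theorem card_odds_one_notMem_add_card_odds_le (m : ℕ) :
    ((odds (m + 1)).filter fun p => 1 ∉ p.parts).card + (odds m).card ≤ (odds (m + 1)).card := by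
  rw [← Finset.card_filter_add_card_filter_not (s := odds (m + 1)) (fun p => 1 ∉ p.parts)]
  refine Nat.add_le_add_left (Finset.card_le_card_of_injOn consOne ?_ consOne_injective.injOn) _
  intro p hp
  simp only [odds, restricted, Finset.coe_filter, Finset.mem_filter, Finset.mem_univ, true_and,
    Set.mem_ofPred_eq] at hp ⊢
  simpa [consOne] using hp

theorem card_distincts_le (m : ℕ) :
    (distincts (m + 1)).card ≤
      ((distincts (m + 1)).filter fun p => ¬(1 ∈ p.parts ∨ 2 ∈ p.parts)).card +
        (distincts m).card := by
  rw [← Finset.card_filter_add_card_filter_not (s := distincts (m + 1))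
    (fun p => 1 ∈ p.parts ∨ 2 ∈ p.parts), Nat.add_comm]
  refine Nat.add_le_add_left ?_ _
  refine Finset.card_le_card_of_injOn
    (fun p => if hp : 1 ∈ p.parts ∨ 2 ∈ p.parts then p.lowerSmallPart hp else indiscrete m) ?_ ?_
  · intro p hp
    simp only [distincts, Finset.coe_filter, Finset.mem_filter, Finset.mem_univ, true_and,
      Set.mem_ofPred_eq] at hp ⊢
    rw [dif_pos hp.2]
    exact lowerSmallPart_nodup hp.2 hp.1
  · intro p hp q hq h
    simp only [distincts, Finset.coe_filter, Finset.mem_filter, Finset.mem_univ, true_and,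
      Set.mem_ofPred_eq] at hp hq
    dsimp only at h
    rw [dif_pos hp.2, dif_pos hq.2] at h
    exact lowerSmallPart_inj hp.2 hq.2 hp.1 hq.1 h

/-- Partitions into odd parts greater than `1` are at most as numerous as partitions into distinct
parts greater than `2`. -/
theorem card_odds_one_notMem_le (m : ℕ) :
    ((odds (m + 1)).filter fun p => 1 ∉ p.parts).card ≤
      ((distincts (m + 1)).filter fun p => ¬(1 ∈ p.parts ∨ 2 ∈ p.parts)).card := by
  have hodd := card_odds_one_notMem_add_card_odds_le m
  have hdist := card_distincts_le m
  rw [card_odds_eq_card_distincts, card_odds_eq_card_distincts] at hodd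
  omega

end Nat.Partition

theorem Multiset.isChain_sort_add_one_le {s : Multiset ℕ} (hs : s.Nodup) :
    (s.sort (· ≤ ·)).IsChain (fun x y => x + 1 ≤ y) := by
  refine List.Pairwise.isChain ?_
  have hnodup : (s.sort (· ≤ ·)).Nodup := by
    rwa [← Multiset.coe_nodup, Multiset.sort_eq]
  exact ((s.pairwise_sort (· ≤ ·)).and hnodup).imp fun h => lt_of_le_of_ne h.1 h.2

theorem stmt10 (n : ℕ) (hn : 1 ≤ n) :
    congMinusCount 1 3 n ≤ gapCount 1 3 n := by
  classical
  obtain ⟨m, rfl⟩ : ∃ m, n = m + 1 := ⟨n - 1, by omega⟩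
  unfold congMinusCount gapCount
  rw [Nat.card_eq_fintype_card, Nat.card_eq_fintype_card, Fintype.card_subtype,
    Fintype.card_subtype]
  refine (Finset.card_le_card ?_).trans
    ((Nat.Partition.card_odds_one_notMem_le m).trans (Finset.card_le_card ?_))
  · intro p hp
    simp only [Nat.Partition.odds, Nat.Partition.restricted, Finset.mem_filter, Finset.mem_univ,
      true_and] at hp ⊢
    refine ⟨fun x hx => ?_, fun h => hp.2 1 h rfl⟩
    have := hp.1 x hx
    simp only [Nat.ModEq] at this
    rw [Nat.not_even_iff]
    omega
  · intro p hp
    simp only [Nat.Partition.distincts, Finset.mem_filter, Finset.mem_univ, true_and] at hp ⊢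
    refine ⟨fun x hx => ?_, Multiset.isChain_sort_add_one_le hp.1⟩
    have hpos := p.parts_pos hx
    by_contra hlt
    obtain rfl | rfl : x = 1 ∨ x = 2 := by omega
    · exact hp.2 (Or.inl hx)
    · exact hp.2 (Or.inr hx)
end
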